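/- arXiv:2007.04031 — 10 statements merged into one kernel-verified Lean document; each statement's English description precedes it below -/
import Mathlib

section
/- If a sequence (a_n)_{n≥1} of integers is completely multiplicative (a_{mn} = a_m · a_n for all m, n ≥ 1 and a_1 = 1) and is a Dold sequence, then a_n = 1 for every n ≥ 1. -/
/-- A sequence `(a n)` of integers (indexed by `n ≥ 1`) is a Dold sequence if for every
`n ≥ 1`, `n` divides `∑_{d ∣ n} μ(n/d) · a d`. -/
def DoldSeq (a : ℕ → ℤ) : Prop :=
  ∀ n : ℕ, 1 ≤ n →
    (n : ℤ) ∣ ∑ d ∈ n.divisors, ArithmeticFunction.moebius (n / d) * a d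

/-!
At `n = p ^ (k + 1)` only two terms of the Möbius sum survive, and the Dold condition reads
`p ^ (k + 1) ∣ a (p ^ (k + 1)) - a (p ^ k) = a p ^ k * (a p - 1)`. For `k = 0` this makes `a p`
coprime to `p`, so every power of `p` divides `a p - 1`, which forces `a p = 1`.
-/

section CompletelyMultiplicative

variable {M : Type*} {f : ℕ → M}

theorem apply_pow_of_completelyMultiplicative [Monoid M] (h1 : f 1 = 1)
    (hmul : ∀ m n : ℕ, 1 ≤ m → 1 ≤ n → f (m * n) = f m * f n) {n : ℕ} (hn : 1 ≤ n) (k : ℕ) :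
    f (n ^ k) = f n ^ k := by
  induction k with
  | zero => rw [pow_zero, pow_zero, h1]
  | succ k ih => rw [pow_succ, hmul _ _ (Nat.one_le_pow k n hn) hn, ih, pow_succ]

theorem eq_one_of_completelyMultiplicative_of_forall_prime [MulOneClass M] (h1 : f 1 = 1)
    (hmul : ∀ m n : ℕ, 1 ≤ m → 1 ≤ n → f (m * n) = f m * f n)
    (hprime : ∀ p : ℕ, p.Prime → f p = 1) {n : ℕ} (hn : 1 ≤ n) : f n = 1 := by
  induction n using induction_on_primes with
  | zero => exact absurd hn (by decide)
  | one => exact h1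
  | prime_mul p m hp ih =>
    have hm : 1 ≤ m := Nat.pos_of_mul_pos_left hn
    rw [hmul p m hp.one_le hm, hprime p hp, ih hm, one_mul]

end CompletelyMultiplicative

theorem eq_one_of_forall_pow_succ_dvd {R : Type*} [CommRing R] [IsCancelMulZero R]
    [WfDvdMonoid R] {p x : R} (hp : ¬IsUnit p) (h : ∀ k : ℕ, p ^ (k + 1) ∣ x ^ k * (x - 1)) :
    x = 1 := by
  have hcop : IsCoprime p x := by
    obtain ⟨c, hc⟩ : p ∣ x - 1 := by simpa using h 0
    exact ⟨-c, 1, by linear_combination hc⟩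
  have hdvd (k : ℕ) : p ^ (k + 1) ∣ x - 1 := hcop.pow.dvd_of_dvd_mul_left (h k)
  by_contra hx
  obtain ⟨k, hk⟩ := FiniteMultiplicity.of_not_isUnit hp (sub_ne_zero.mpr hx)
  exact hk (hdvd k)

theorem sum_divisors_prime_pow_succ_moebius_smul {G : Type*} [AddCommGroup G] {p : ℕ}
    (hp : p.Prime) (k : ℕ) (f : ℕ → G) :
    ∑ d ∈ (p ^ (k + 1)).divisors, ArithmeticFunction.moebius (p ^ (k + 1) / d) • f d =
      f (p ^ (k + 1)) - f (p ^ k) := by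
  have hquot {i : ℕ} (hi : i ≤ k + 1) : p ^ (k + 1) / p ^ i = p ^ (k + 1 - i) :=
    Nat.pow_div hi hp.pos
  have hvanish : ∀ i ∈ Finset.range k,
      ArithmeticFunction.moebius (p ^ (k + 1) / p ^ i) • f (p ^ i) = 0 := by
    intro i hi
    have hik : i < k := Finset.mem_range.mp hi
    rw [hquot (by omega), ArithmeticFunction.moebius_apply_prime_pow hp (by omega),
      if_neg (by omega), zero_smul]
  rw [Nat.sum_divisors_prime_pow hp, Finset.sum_range_succ, Finset.sum_range_succ,
    Finset.sum_eq_zero hvanish, hquot k.le_succ, hquot le_rfl, Nat.add_sub_cancel_left,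
    Nat.sub_self, pow_one, pow_zero, ArithmeticFunction.moebius_apply_prime hp,
    ArithmeticFunction.moebius_apply_one, neg_one_smul, one_smul, zero_add, neg_add_eq_sub]

theorem DoldSeq.prime_pow_succ_dvd_sub {a : ℕ → ℤ} (ha : DoldSeq a) {p : ℕ} (hp : p.Prime)
    (k : ℕ) : (p : ℤ) ^ (k + 1) ∣ a (p ^ (k + 1)) - a (p ^ k) := by
  rw [← sum_divisors_prime_pow_succ_moebius_smul hp k a]
  exact_mod_cast ha (p ^ (k + 1)) (Nat.one_le_pow _ _ hp.pos)

theorem completelyMultiplicative_dold_eq_one (a : ℕ → ℤ)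
    (h1 : a 1 = 1)
    (hmul : ∀ m n : ℕ, 1 ≤ m → 1 ≤ n → a (m * n) = a m * a n)
    (hdold : DoldSeq a) :
    ∀ n : ℕ, 1 ≤ n → a n = 1 := by
  have hprime (p : ℕ) (hp : p.Prime) : a p = 1 := by
    refine eq_one_of_forall_pow_succ_dvd (Nat.prime_iff_prime_int.mp hp).not_isUnit fun k => ?_
    have hpow := apply_pow_of_completelyMultiplicative h1 hmul hp.one_le
    calc (p : ℤ) ^ (k + 1) ∣ a (p ^ (k + 1)) - a (p ^ k) := hdold.prime_pow_succ_dvd_sub hp k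
      _ = a p ^ k * (a p - 1) := by rw [hpow, hpow, pow_succ, mul_sub_one]
  exact fun n hn => eq_one_of_completelyMultiplicative_of_forall_prime h1 hmul hprime hn
end

section
/- Let h be a polynomial with rational coefficients taking integer values on the positive integers. If the sequence (h(n))_{n≥1} is a Dold sequence, then h is a constant polynomial. -/
/-! By Möbius inversion a Dold sequence has the form `a n = ∑_{d ∣ n} d · b d`, so `a (p * n)` and
`a n` differ by a sum over divisors divisible by `p`, and `p ∣ a (p * n) - a n` for every prime `p`.
A polynomial sequence satisfies `m - n ∣ D * (a m - a n)` for a common denominator `D` of the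
coefficients. Hence, modulo every prime `p`, we get
`D * a m ≡ D * a (p * m) ≡ D * a (p * n) ≡ D * a n`, and so `a m = a n`. -/

open Polynomial

theorem int_eq_zero_of_forall_prime_dvd {x : ℤ} (hx : ∀ p : ℕ, p.Prime → (p : ℤ) ∣ x) : x = 0 := by
  obtain ⟨p, hlt, hp⟩ := Nat.exists_infinite_primes (x.natAbs + 1)
  exact Int.eq_zero_of_abs_lt_dvd (hx p hp) (by rw [Int.abs_eq_natAbs]; exact_mod_cast hlt)

theorem pow_succ_dvd_of_dvd_mul_of_not_dvd {M : Type*} [CommMonoidWithZero M] [IsCancelMulZero M]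
    [DecompositionMonoid M] {p d m : M} {k : ℕ} (hp : Prime p) (hd : d ∣ p ^ (k + 1) * m)
    (hd' : ¬ d ∣ p ^ k * m) : p ^ (k + 1) ∣ d := by
  obtain ⟨e, f, he, hf, rfl⟩ := exists_dvd_and_dvd_of_dvd_mul hd
  obtain ⟨j, -, hej⟩ := (dvd_prime_pow hp (k + 1)).1 he
  have hkj : k < j := by
    by_contra! hjk
    exact hd' (mul_dvd_mul (hej.dvd.trans (pow_dvd_pow p hjk)) hf)
  exact ((pow_dvd_pow p hkj).trans hej.symm.dvd).mul_right f

theorem exists_mem_nonZeroDivisors_sub_dvd_mul_sub {A K : Type*} [CommRing A] [CommRing K]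
    [Algebra A K] [IsFractionRing A K] (h : K[X]) :
    ∃ D ∈ nonZeroDivisors A, ∀ x y u v : A,
      algebraMap A K u = h.eval (algebraMap A K x) →
      algebraMap A K v = h.eval (algebraMap A K y) → x - y ∣ D * (u - v) := by
  obtain ⟨D, hD, hH⟩ := IsLocalization.integerNormalization_spec (nonZeroDivisors A) h
  set H := IsLocalization.integerNormalization (nonZeroDivisors A) h
  have eval_H {x u : A} (hu : algebraMap A K u = h.eval (algebraMap A K x)) :
      H.eval x = D * u := by
    apply IsFractionRing.injective A K
    rw [← eval_map_apply, hH, eval_smul, ← hu, Algebra.smul_def, map_mul]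
  refine ⟨D, hD, fun x y u v hu hv => ?_⟩
  rw [mul_sub, ← eval_H hu, ← eval_H hv]
  exact sub_dvd_eval_sub x y H

namespace DoldSeq

variable {a : ℕ → ℤ}

theorem exists_eq_sum_divisors_mul (ha : DoldSeq a) :
    ∃ b : ℕ → ℤ, ∀ n : ℕ, 1 ≤ n → a n = ∑ d ∈ n.divisors, d * b d := by
  choose! b hb using ha
  refine ⟨b, fun n hn => Eq.symm <|
    ArithmeticFunction.sum_eq_iff_sum_mul_moebius_eq.2 (fun m hm => ?_) n hn⟩
  rw [← hb m hm]
  exact Nat.sum_divisorsAntidiagonal' fun i j => ArithmeticFunction.moebius i * a j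

theorem prime_pow_succ_dvd_sub_s1 (ha : DoldSeq a) {p : ℕ} (hp : p.Prime) (k : ℕ) {m : ℕ}
    (hm : 1 ≤ m) : (p : ℤ) ^ (k + 1) ∣ a (p ^ (k + 1) * m) - a (p ^ k * m) := by
  obtain ⟨b, hb⟩ := ha.exists_eq_sum_divisors_mul
  have pos (j : ℕ) : 0 < p ^ j * m := Nat.mul_pos (pow_pos hp.pos j) hm
  have hsub : (p ^ k * m).divisors ⊆ (p ^ (k + 1) * m).divisors :=
    Nat.divisors_subset_of_dvd (pos (k + 1)).ne' (mul_dvd_mul_right (pow_dvd_pow p k.le_succ) m)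
  rw [hb _ (pos (k + 1)), hb _ (pos k), ← Finset.sum_sdiff_eq_sub hsub]
  refine Finset.dvd_sum fun d hd => Dvd.dvd.mul_right ?_ (b d)
  obtain ⟨hmem, hnotMem⟩ := Finset.mem_sdiff.1 hd
  have not_dvd : ¬ d ∣ p ^ k * m := fun h => hnotMem (Nat.mem_divisors.2 ⟨h, (pos k).ne'⟩)
  exact_mod_cast
    pow_succ_dvd_of_dvd_mul_of_not_dvd hp.prime (Nat.dvd_of_mem_divisors hmem) not_dvd

theorem eq_of_sub_dvd_mul_sub (ha : DoldSeq a) {D : ℤ} (hD : D ≠ 0)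
    (hdvd : ∀ m n : ℕ, 1 ≤ m → 1 ≤ n → (m - n : ℤ) ∣ D * (a m - a n))
    {m n : ℕ} (hm : 1 ≤ m) (hn : 1 ≤ n) : a m = a n := by
  suffices hzero : D * (a m - a n) = 0 from
    sub_eq_zero.1 ((mul_eq_zero.1 hzero).resolve_left hD)
  refine int_eq_zero_of_forall_prime_dvd fun p hp => ?_
  have dold {l : ℕ} (hl : 1 ≤ l) : (p : ℤ) ∣ a (p * l) - a l := by
    simpa using ha.prime_pow_succ_dvd_sub_s1 hp 0 hl
  have poly : (p : ℤ) ∣ D * (a (p * m) - a (p * n)) := by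
    refine dvd_trans ⟨m - n, ?_⟩
      (hdvd (p * m) (p * n) (Nat.mul_pos hp.pos hm) (Nat.mul_pos hp.pos hn))
    push_cast
    ring
  have split : D * (a m - a n) =
      D * (a (p * m) - a (p * n)) - D * (a (p * m) - a m) + D * (a (p * n) - a n) := by ring
  rw [split]
  exact (poly.sub ((dold hm).mul_left D)).add ((dold hn).mul_left D)

end DoldSeq

/-- If `h` is a polynomial with rational coefficients taking integer values on the
positive integers (witnessed by the integer sequence `a`) and `(h(n))_{n ≥ 1}` is a
Dold sequence, then `h` is a constant polynomial. -/
theorem polynomial_dold_is_constant (h : Polynomial ℚ) (a : ℕ → ℤ)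
    (hval : ∀ n : ℕ, 1 ≤ n → (a n : ℚ) = h.eval (n : ℚ))
    (hdold : DoldSeq a) :
    ∃ q : ℚ, h = Polynomial.C q := by
  obtain ⟨D, hD, hdvd⟩ := exists_mem_nonZeroDivisors_sub_dvd_mul_sub (A := ℤ) h
  have a_eq {n : ℕ} (hn : 1 ≤ n) : a n = a 1 :=
    hdold.eq_of_sub_dvd_mul_sub (nonZeroDivisors.ne_zero hD)
      (fun m n hm hn => hdvd m n (a m) (a n) (by simpa using hval m hm) (by simpa using hval n hn))
      hn le_rfl
  refine ⟨a 1, eq_of_infinite_eval_eq _ _ ?_⟩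
  refine ((Set.Ici_infinite 1).image Nat.cast_injective.injOn).mono ?_
  rintro _ ⟨n, hn, rfl⟩
  change h.eval (n : ℚ) = (C (a 1 : ℚ)).eval (n : ℚ)
  rw [← hval n hn, a_eq hn, eval_C]
end

section
/- Let (a_n)_{n≥1} be a sequence of rational numbers and let (c_n)_{n≥1} be its generating sequence. Then in the ring of formal power series ℚ[[z]] one has the identity exp(∑_{n≥1} (a_n/n)·z^n) · (1 − ∑_{n≥1} c_n·z^n) = 1; equivalently, exp(∑_{n≥1} (a_n/n)·z^n) = (1 − ∑_{n≥1} c_n·z^n)^{−1}. -/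
/-!
Let `F = ∑_{n ≥ 1} (a n / n) z^n` and `u = 1 - ∑_{n ≥ 1} c n z^n`. The recursion for `c` says
exactly that `u' = -F' u`, while `(exp F)' = F' exp F` by the chain rule. Hence `exp F * u` has zero
derivative, so it equals its constant term `1`.
-/

open PowerSeries

/-- The exponential `exp f = ∑_{k ≥ 0} f^k / k!` of a formal power series `f` (with zero
constant coefficient), given by its coefficients: since `coeff n (f ^ k) = 0` for `k > n`
when `f` has zero constant term, `coeff n (exp f) = ∑_{k = 0}^{n} coeff n (f ^ k) / k!`. -/
noncomputable def expPS (f : PowerSeries ℚ) : PowerSeries ℚ :=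
  PowerSeries.mk fun n =>
    ∑ k ∈ Finset.range (n + 1), PowerSeries.coeff n (f ^ k) / (Nat.factorial k : ℚ)

section Substitution

variable {R S : Type*} [CommRing R] [CommRing S] [Algebra R S]

theorem coeff_subst_eq_sum_range (g : R⟦X⟧) {f : S⟦X⟧} (hf : constantCoeff f = 0) (n : ℕ) :
    coeff n (g.subst f) = ∑ k ∈ Finset.range (n + 1), coeff k g • coeff n (f ^ k) := by
  rw [coeff_subst' (.of_constantCoeff_zero' hf)]
  refine finsum_eq_sum_of_support_subset _ fun k hk ↦ ?_
  rw [Finset.coe_range, Set.mem_Iio, Nat.lt_succ_iff]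
  by_contra! hnk
  have hpow : coeff n (f ^ k) = 0 :=
    coeff_of_lt_order n <|
      (Nat.cast_lt.mpr hnk).trans_le (le_order_pow_of_constantCoeff_eq_zero k hf)
  exact hk (smul_eq_zero_of_right _ hpow)

theorem constantCoeff_subst_eq_algebraMap (g : R⟦X⟧) {f : S⟦X⟧} (hf : constantCoeff f = 0) :
    constantCoeff (g.subst f) = algebraMap R S (constantCoeff g) := by
  simpa [Algebra.algebraMap_eq_smul_one] using coeff_subst_eq_sum_range g hf 0

theorem expPS_eq_subst {f : ℚ⟦X⟧} (hf : constantCoeff f = 0) : expPS f = (exp ℚ).subst f := by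
  ext n
  simp [expPS, coeff_subst_eq_sum_range _ hf, div_eq_inv_mul]

end Substitution

section Exponential

variable {A : Type*} [CommRing A] [Algebra ℚ A]

theorem derivative_exp_subst {f : A⟦X⟧} (hf : HasSubst f) :
    d⁄dX A ((exp A).subst f) = (exp A).subst f * d⁄dX A f := by
  rw [derivative_subst hf, derivative_exp]

theorem exp_subst_mul_eq_one {f u : A⟦X⟧} (hf : constantCoeff f = 0) (hu : constantCoeff u = 1)
    (hderiv : d⁄dX A u = -(d⁄dX A f * u)) : (exp A).subst f * u = 1 := by
  have : IsAddTorsionFree A := .of_module_rat A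
  apply derivative.ext
  · rw [Derivation.leibniz, derivative_exp_subst (.of_constantCoeff_zero' hf), hderiv,
      derivative_one, smul_eq_mul, smul_eq_mul]
    ring
  · rw [map_mul, constantCoeff_subst_eq_algebraMap _ hf, constantCoeff_exp, hu, map_one, map_one,
      mul_one]

end Exponential

/-- The power series `∑_{n ≥ 1} c n X^n` of a sequence indexed from `1`; the value `c 0` is
ignored. -/
noncomputable def mkFromOne {R : Type*} [Semiring R] (c : ℕ → R) : R⟦X⟧ :=
  mk fun n ↦ if n = 0 then 0 else c n

section MkFromOne

variable {R : Type*}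

theorem constantCoeff_mkFromOne [Semiring R] (c : ℕ → R) : constantCoeff (mkFromOne c) = 0 := by
  simp [mkFromOne, ← coeff_zero_eq_constantCoeff_apply]

theorem coeff_mkFromOne_of_ne_zero [Semiring R] (c : ℕ → R) {n : ℕ} (hn : n ≠ 0) :
    coeff n (mkFromOne c) = c n := by
  rw [mkFromOne, coeff_mk, if_neg hn]

theorem coeff_mkFromOne_mul [Semiring R] (c : ℕ → R) (f : R⟦X⟧) (n : ℕ) :
    coeff n (mkFromOne c * f) = ∑ i ∈ Finset.Ico 1 (n + 1), c i * coeff (n - i) f := by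
  rw [coeff_mul, Finset.Nat.sum_antidiagonal_eq_sum_range_succ_mk, Finset.range_eq_Ico,
    Finset.sum_eq_sum_Ico_succ_bot n.succ_pos, coeff_zero_eq_constantCoeff_apply,
    constantCoeff_mkFromOne, zero_mul, zero_add]
  refine Finset.sum_congr rfl fun i hi ↦ ?_
  rw [coeff_mkFromOne_of_ne_zero c (Nat.one_le_iff_ne_zero.mp (Finset.mem_Ico.mp hi).1)]

theorem coeff_derivative_mkFromOne [CommSemiring R] (c : ℕ → R) (n : ℕ) :
    coeff n (d⁄dX R (mkFromOne c)) = ((n + 1 : ℕ) : R) * c (n + 1) := by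
  rw [coeff_derivative, coeff_mkFromOne_of_ne_zero c n.succ_ne_zero, mul_comm, Nat.cast_succ]

theorem derivative_mkFromOne_inv_smul [CommSemiring R] [Module ℚ R] (a : ℕ → R) :
    d⁄dX R (mkFromOne fun n ↦ (n : ℚ)⁻¹ • a n) = mk fun n ↦ a (n + 1) := by
  ext n
  rw [coeff_derivative_mkFromOne, coeff_mk, ← nsmul_eq_mul, ← Nat.cast_smul_eq_nsmul ℚ,
    smul_inv_smul₀ (Nat.cast_ne_zero.mpr n.succ_ne_zero)]

end MkFromOne

/-- `c` is the generating sequence of `a`: `n c_n = a_n - c_1 a_{n-1} - ⋯ - c_{n-1} a_1` for all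
`n ≥ 1`. Both sequences are indexed from `1`, and their values at `0` are irrelevant. -/
def IsGeneratingSequence {R : Type*} [Ring R] (a c : ℕ → R) : Prop :=
  ∀ n : ℕ, 1 ≤ n → (n : R) * c n = a n - ∑ i ∈ Finset.Ico 1 n, c i * a (n - i)

theorem IsGeneratingSequence.derivative_mkFromOne {R : Type*} [CommRing R] {a c : ℕ → R}
    (hc : IsGeneratingSequence a c) :
    d⁄dX R (mkFromOne c) = (mk fun n ↦ a (n + 1)) * (1 - mkFromOne c) := by
  ext n
  rw [coeff_derivative_mkFromOne, hc (n + 1) n.succ_pos, mul_comm, sub_mul, one_mul, map_sub,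
    coeff_mk, coeff_mkFromOne_mul]
  congr 1
  refine Finset.sum_congr rfl fun i hi ↦ ?_
  rw [coeff_mk, Nat.sub_add_comm (Nat.lt_succ_iff.mp (Finset.mem_Ico.mp hi).2)]

theorem exp_mul_one_sub_generating_eq_one_general {A : Type*} [CommRing A] [Algebra ℚ A]
    {a c : ℕ → A} (hc : IsGeneratingSequence a c) :
    (exp A).subst (mkFromOne fun n ↦ (n : ℚ)⁻¹ • a n) * (1 - mkFromOne c) = 1 := by
  apply exp_subst_mul_eq_one (constantCoeff_mkFromOne _)
  · rw [map_sub, map_one, constantCoeff_mkFromOne, sub_zero]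
  · rw [map_sub, derivative_one, zero_sub, hc.derivative_mkFromOne, derivative_mkFromOne_inv_smul]

/-- If `(c n)` is the generating sequence of the sequence of rationals `(a n)`, i.e.
`n·c n = a n − c 1·a (n−1) − ⋯ − c (n−1)·a 1` for all `n ≥ 1`, then in `ℚ⟦z⟧` we have
`exp (∑_{n ≥ 1} (a n / n) z^n) · (1 − ∑_{n ≥ 1} c n · z^n) = 1`. -/
theorem exp_mul_one_sub_generating_eq_one (a c : ℕ → ℚ)
    (hc : ∀ n : ℕ, 1 ≤ n → (n : ℚ) * c n = a n - ∑ i ∈ Finset.Ico 1 n, c i * a (n - i)) :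
    expPS (PowerSeries.mk fun n => if n = 0 then 0 else a n / (n : ℚ)) *
      (1 - PowerSeries.mk fun n => if n = 0 then 0 else c n) = 1 := by
  change expPS (mkFromOne fun n ↦ a n / n) * (1 - mkFromOne c) = 1
  simpa only [← expPS_eq_subst (constantCoeff_mkFromOne _), smul_eq_mul, ← div_eq_inv_mul]
    using exp_mul_one_sub_generating_eq_one_general hc
end

section
/- Let (a_n)_{n≥1} be a sequence of integers and let (c_n)_{n≥1} be its generating sequence. Then (a_n) is a Dold sequence if and only if c_n is an integer for every n ≥ 1. -/
/-!
Write `C = 1 - ∑ cₙ Xⁿ`. The recursion for `c` says that `∑ a₍ₙ₊₁₎ Xⁿ = -C' / C`, so the sequences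
having a generating sequence with entries in a given ring form a group under addition: adding two of
them multiplies the series `C`. The sequence `m ↦ d` if `d ∣ m`, `m ↦ 0` otherwise, belongs to this
group, with `C = 1 - X ^ d`.

Let `f` be the Möbius transform of `a`, so that `a m = ∑ d ∣ m, f d`. If `f d = d * b d` for all
`d < n`, then below `n` the sequence `a` agrees with the combination of these elementary sequences
with coefficients `b d`, and at `n` it exceeds it by `f n`. That combination has an integral
generating sequence `e`, and comparing the two recursions gives `n * c n = n * e n + f n`: the
integrality of `c n` is equivalent to `n ∣ f n`, and the theorem follows by strong induction.
-/

open Finset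

section GeneratingSeq

/-- `c` is the generating sequence of `a`, over an arbitrary ring. Both sequences are indexed by
`n ≥ 1`; the values `a 0` and `c 0` are irrelevant. -/
def IsGeneratingSeq {R : Type*} [Ring R] (a c : ℕ → R) : Prop :=
  ∀ n : ℕ, 1 ≤ n → (n : R) * c n = a n - ∑ i ∈ Ico 1 n, c i * a (n - i)

namespace IsGeneratingSeq

theorem map {R S : Type*} [Ring R] [Ring S] {a c : ℕ → R} (h : IsGeneratingSeq a c) (φ : R →+* S) :
    IsGeneratingSeq (fun n => φ (a n)) fun n => φ (c n) := fun n hn => by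
  simpa only [map_mul, map_natCast, map_sub, map_sum] using congrArg φ (h n hn)

variable {R : Type*} [Ring R] {a a' c c' : ℕ → R} {n : ℕ}

theorem congr_right (h : IsGeneratingSeq a c) (hc : Set.EqOn c c' (Set.Ici 1)) :
    IsGeneratingSeq a c' := fun n hn => by
  rw [← hc hn, h n hn]
  exact congrArg _ (sum_congr rfl fun i hi => by rw [hc (mem_Ico.1 hi).1])

theorem mul_sub_mul_eq_of_eqOn (h : IsGeneratingSeq a c) (h' : IsGeneratingSeq a' c') (hn : 1 ≤ n)
    (ha : Set.EqOn a a' (Set.Ico 1 n)) (hc : Set.EqOn c c' (Set.Ico 1 n)) :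
    n * c n - n * c' n = a n - a' n := by
  have hsum : ∑ i ∈ Ico 1 n, c i * a (n - i) = ∑ i ∈ Ico 1 n, c' i * a' (n - i) :=
    sum_congr rfl fun i hi => by
      obtain ⟨hi₁, hin⟩ := mem_Ico.1 hi
      rw [hc ⟨hi₁, hin⟩, ha ⟨by omega, by omega⟩]
  rw [h n hn, h' n hn, hsum, sub_sub_sub_cancel_right]

theorem eqOn [IsAddTorsionFree R] (h : IsGeneratingSeq a c) (h' : IsGeneratingSeq a' c')
    (ha : Set.EqOn a a' (Set.Ico 1 n)) : Set.EqOn c c' (Set.Ico 1 n) := by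
  intro m
  induction m using Nat.strong_induction_on with
  | _ m ih =>
    rintro ⟨hm, hmn⟩
    have hlt : Set.EqOn c c' (Set.Ico 1 m) := fun i hi => ih i hi.2 ⟨hi.1, hi.2.trans hmn⟩
    have hdiff : m * c m - m * c' m = a m - a' m :=
      h.mul_sub_mul_eq_of_eqOn h' hm (ha.mono (Set.Ico_subset_Ico_right hmn.le)) hlt
    rw [ha ⟨hm, hmn⟩, sub_self, sub_eq_zero, ← nsmul_eq_mul, ← nsmul_eq_mul] at hdiff
    exact nsmul_right_injective (by omega) hdiff

end IsGeneratingSeq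

end GeneratingSeq

section PowerSeries

open PowerSeries

variable {R : Type*} [CommRing R]

theorem isGeneratingSeq_neg_coeff_iff {Q : R⟦X⟧} (hQ : constantCoeff Q = 1) (a : ℕ → R) :
    IsGeneratingSeq a (fun n => -coeff n Q) ↔ Q * mk (fun n => a (n + 1)) = -d⁄dX R Q := by
  have hcoeff (n : ℕ) : coeff n (Q * mk fun n => a (n + 1)) =
      a (n + 1) + ∑ i ∈ Ico 1 (n + 1), coeff i Q * a (n + 1 - i) := by
    rw [coeff_mul, Nat.sum_antidiagonal_eq_sum_range_succ_mk, sum_range_eq_add_Ico _ n.succ_pos]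
    congr 1
    · simp [hQ]
    · refine sum_congr rfl fun i hi => ?_
      rw [coeff_mk, Nat.sub_add_comm (by grind)]
  have hiff (n : ℕ) : ((n + 1 : ℕ) : R) * -coeff (n + 1) Q =
        a (n + 1) - ∑ i ∈ Ico 1 (n + 1), -coeff i Q * a (n + 1 - i) ↔
      coeff n (Q * mk fun n => a (n + 1)) = coeff n (-d⁄dX R Q) := by
    rw [hcoeff, map_neg, coeff_derivative]
    simp only [neg_mul, sum_neg_distrib]
    push_cast
    constructor <;> intro h <;> linear_combination -h
  refine ⟨fun h => PowerSeries.ext fun n => (hiff n).1 (h (n + 1) n.succ_pos), fun h n hn => ?_⟩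
  obtain ⟨n, rfl⟩ := Nat.exists_eq_add_of_le' hn
  exact (hiff n).2 (congrArg (coeff n) h)

theorem exists_isGeneratingSeq_iff {a : ℕ → R} :
    (∃ c, IsGeneratingSeq a c) ↔
      ∃ Q : R⟦X⟧, constantCoeff Q = 1 ∧ Q * mk (fun n => a (n + 1)) = -d⁄dX R Q := by
  refine ⟨fun ⟨c, hc⟩ => ?_, fun ⟨Q, hQ, h⟩ => ⟨_, (isGeneratingSeq_neg_coeff_iff hQ a).2 h⟩⟩
  let Q : R⟦X⟧ := 1 - X * PowerSeries.mk fun n => c (n + 1)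
  have hQ : constantCoeff Q = 1 := by simp [Q]
  have hcQ : Set.EqOn c (fun n => -coeff n Q) (Set.Ici 1) := fun n hn => by
    obtain ⟨n, rfl⟩ := Nat.exists_eq_add_of_le' hn
    simp [Q, coeff_succ_X_mul, coeff_one]
  exact ⟨Q, hQ, (isGeneratingSeq_neg_coeff_iff hQ a).1 (hc.congr_right hcQ)⟩

variable (R) in
/-- The additive group of the sequences that have a generating sequence with entries in `R`; since
the recursion divides by `n`, not every sequence does. -/
def generatedSeqs : AddSubgroup (ℕ → R) where
  carrier := {a | ∃ c, IsGeneratingSeq a c}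
  zero_mem' := ⟨0, fun n _ => by simp⟩
  add_mem' {a b} ha hb := by
    obtain ⟨P, hP, hPa⟩ := exists_isGeneratingSeq_iff.1 ha
    obtain ⟨Q, hQ, hQb⟩ := exists_isGeneratingSeq_iff.1 hb
    refine exists_isGeneratingSeq_iff.2 ⟨P * Q, by rw [map_mul, hP, hQ, one_mul], ?_⟩
    have hadd : mk (fun n => (a + b) (n + 1)) =
        mk (fun n => a (n + 1)) + mk fun n => b (n + 1) := rfl
    rw [hadd, Derivation.leibniz, smul_eq_mul, smul_eq_mul]
    linear_combination Q * hPa + P * hQb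
  neg_mem' {a} ha := by
    obtain ⟨Q, hQ, hQa⟩ := exists_isGeneratingSeq_iff.1 ha
    have hinv : Q * Q.invOfUnit 1 = 1 := mul_invOfUnit Q 1 hQ
    have hderiv : Q * d⁄dX R (Q.invOfUnit 1) + Q.invOfUnit 1 * d⁄dX R Q = 0 := by
      simpa only [Derivation.leibniz, smul_eq_mul, Derivation.map_one_eq_zero] using
        congrArg (d⁄dX R) hinv
    refine exists_isGeneratingSeq_iff.2 ⟨Q.invOfUnit 1, by simp, ?_⟩
    have hneg : mk (fun n => (-a) (n + 1)) = -mk fun n => a (n + 1) := rfl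
    rw [hneg]
    linear_combination (Q.invOfUnit 1 * mk (fun n => a (n + 1)) - d⁄dX R (Q.invOfUnit 1)) * hinv +
      Q.invOfUnit 1 * hderiv - Q.invOfUnit 1 ^ 2 * hQa

end PowerSeries

section RegSeq

/-- The elementary Dold sequence of period `d`, with values `d` at the multiples of `d` and `0`
elsewhere. -/
def regSeq (R : Type*) [AddMonoidWithOne R] (d m : ℕ) : R :=
  if d ∣ m then d else 0

theorem isGeneratingSeq_regSeq (R : Type*) [Ring R] {d : ℕ} (hd : 1 ≤ d) :
    IsGeneratingSeq (regSeq R d) (Pi.single d 1) := by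
  intro n hn
  have hsum : ∑ i ∈ Ico 1 n, (Pi.single d 1 : ℕ → R) i * regSeq R d (n - i) =
      if d < n then regSeq R d (n - d) else 0 := by
    simp [Pi.single_apply, ite_mul, hd]
  rw [hsum, regSeq, regSeq]
  rcases lt_trichotomy d n with hdn | rfl | hdn
  · simp [hdn, hdn.ne', Nat.dvd_sub_self_right, hdn.not_ge]
  · simp
  · simp [hdn.not_gt, hdn.ne, Nat.not_dvd_of_pos_of_lt hn hdn]

theorem regSeq_mem_generatedSeqs (R : Type*) [CommRing R] {d : ℕ} (hd : 1 ≤ d) :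
    regSeq R d ∈ generatedSeqs R :=
  ⟨_, isGeneratingSeq_regSeq R hd⟩

theorem sum_zsmul_regSeq (R : Type*) [AddCommGroupWithOne R] (s : Finset ℕ) (b : ℕ → ℤ) (m : ℕ) :
    (∑ d ∈ s, b d • regSeq R d) m = ∑ d ∈ s with d ∣ m, b d • (d : R) := by
  simp only [Finset.sum_apply, sum_filter, Pi.smul_apply, regSeq, smul_ite, smul_zero]

end RegSeq

section MoebiusTransform

variable {M : Type*} [AddCommGroup M]

/-- The Möbius transform `n ↦ ∑_{d ∣ n} μ(n/d) a d` of a sequence, whose divisibility by `n` is the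
condition in `DoldSeq`. -/
def moebiusTransform (a : ℕ → M) (n : ℕ) : M :=
  ∑ d ∈ n.divisors, ArithmeticFunction.moebius (n / d) • a d

theorem sum_divisors_moebiusTransform (a : ℕ → M) {n : ℕ} (hn : 1 ≤ n) :
    ∑ d ∈ n.divisors, moebiusTransform a d = a n :=
  ArithmeticFunction.sum_eq_iff_sum_smul_moebius_eq.2
    (fun _ _ => Nat.sum_divisorsAntidiagonal' fun i j => ArithmeticFunction.moebius i • a j) n hn

theorem sum_properDivisors_moebiusTransform (a : ℕ → M) {n : ℕ} (hn : 1 ≤ n) :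
    ∑ d ∈ n.properDivisors, moebiusTransform a d = a n - moebiusTransform a n := by
  rw [← sum_divisors_moebiusTransform a hn, ← Nat.cons_self_properDivisors (by omega), sum_cons,
    add_sub_cancel_left]

end MoebiusTransform

theorem doldSeq_iff_dvd_moebiusTransform {a : ℕ → ℤ} :
    DoldSeq a ↔ ∀ n : ℕ, 1 ≤ n → (n : ℤ) ∣ moebiusTransform a n :=
  Iff.rfl

theorem exists_mem_generatedSeqs_eqOn {a : ℕ → ℤ} {n : ℕ} (hn : 1 ≤ n)
    (h : ∀ m ∈ Ico 1 n, (m : ℤ) ∣ moebiusTransform a m) :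
    ∃ a' ∈ generatedSeqs ℤ, Set.EqOn a a' (Set.Ico 1 n) ∧ a n - a' n = moebiusTransform a n := by
  choose! b hb using h
  have hsum (m : ℕ) : (∑ d ∈ Ico 1 n, b d • regSeq ℤ d) m =
      ∑ d ∈ Ico 1 n with d ∣ m, moebiusTransform a d := by
    rw [sum_zsmul_regSeq]
    exact sum_congr rfl fun d hd => by rw [hb d (mem_filter.1 hd).1, smul_eq_mul, mul_comm]
  refine ⟨∑ d ∈ Ico 1 n, b d • regSeq ℤ d,
    sum_mem fun d hd => zsmul_mem (regSeq_mem_generatedSeqs ℤ (mem_Ico.1 hd).1) _, ?_, ?_⟩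
  · rintro m ⟨hm, hmn⟩
    have hdivisors : {d ∈ Ico 1 n | d ∣ m} = m.divisors := by
      ext d
      have hle (h : d ∣ m) : d ≤ m := Nat.le_of_dvd hm h
      have hpos (h : d ∣ m) : 0 < d := Nat.pos_of_dvd_of_pos h hm
      grind
    rw [hsum, hdivisors, sum_divisors_moebiusTransform a hm]
  · have hproper : {d ∈ Ico 1 n | d ∣ n} = n.properDivisors := rfl
    rw [hsum, hproper, sum_properDivisors_moebiusTransform a hn, sub_sub_cancel]

section Comparison

variable {R : Type*} [Ring R] [IsAddTorsionFree R] {a : ℕ → ℤ} {c : ℕ → R} {n : ℕ}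

theorem exists_mul_eq_mul_add_moebiusTransform (hc : IsGeneratingSeq (fun n => (a n : R)) c)
    (hn : 1 ≤ n) (h : ∀ m ∈ Ico 1 n, (m : ℤ) ∣ moebiusTransform a m) :
    ∃ e : ℤ, (n : R) * c n = n * e + moebiusTransform a n := by
  obtain ⟨a', ⟨e, he⟩, haa', han⟩ := exists_mem_generatedSeqs_eqOn hn h
  have he' : IsGeneratingSeq (fun m => (a' m : R)) fun m => (e m : R) := he.map (Int.castRingHom R)
  have haa'R : Set.EqOn (fun m => (a m : R)) (fun m => (a' m : R)) (Set.Ico 1 n) :=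
    fun m hm => congrArg Int.cast (haa' hm)
  have hdiff := hc.mul_sub_mul_eq_of_eqOn he' hn haa'R (hc.eqOn he' haa'R)
  refine ⟨e n, ?_⟩
  rw [← han, Int.cast_sub, ← hdiff, add_sub_cancel]

theorem dvd_moebiusTransform_iff_exists_int [Nontrivial R]
    (hc : IsGeneratingSeq (fun n => (a n : R)) c) (hn : 1 ≤ n)
    (h : ∀ m ∈ Ico 1 n, (m : ℤ) ∣ moebiusTransform a m) :
    (n : ℤ) ∣ moebiusTransform a n ↔ ∃ k : ℤ, c n = k := by
  have : CharZero R := .of_isAddTorsionFree R R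
  obtain ⟨e, he⟩ := exists_mul_eq_mul_add_moebiusTransform hc hn h
  constructor
  · rintro ⟨k, hk⟩
    refine ⟨e + k, nsmul_right_injective (M := R) (n := n) (by omega) ?_⟩
    simp only [nsmul_eq_mul]
    rw [he, hk]
    push_cast
    rw [mul_add]
  · rintro ⟨k, hk⟩
    rw [hk] at he
    have hk' : (n : ℤ) * k = n * e + moebiusTransform a n := by exact_mod_cast he
    exact (Int.dvd_add_right (dvd_mul_right _ e)).1 ⟨k, hk'.symm⟩

theorem dold_iff_generating_integral_general [Nontrivial R]
    (hc : IsGeneratingSeq (fun n => (a n : R)) c) :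
    DoldSeq a ↔ ∀ n : ℕ, 1 ≤ n → ∃ k : ℤ, c n = k := by
  rw [doldSeq_iff_dvd_moebiusTransform]
  refine ⟨fun h n hn => ?_, fun h n hn => ?_⟩
  · have hlt (m) (hm : m ∈ Ico 1 n) : (m : ℤ) ∣ moebiusTransform a m := h m (mem_Ico.1 hm).1
    exact (dvd_moebiusTransform_iff_exists_int hc hn hlt).1 (h n hn)
  · induction n using Nat.strong_induction_on with
    | _ n ih =>
      have hlt (m) (hm : m ∈ Ico 1 n) : (m : ℤ) ∣ moebiusTransform a m :=
        ih m (mem_Ico.1 hm).2 (mem_Ico.1 hm).1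
      exact (dvd_moebiusTransform_iff_exists_int hc hn hlt).2 (h n hn)

end Comparison

/-- Let `(c n)` be the generating sequence of the integer sequence `(a n)`, i.e. the
sequence of rationals satisfying `n·c n = a n − c 1·a (n−1) − ⋯ − c (n−1)·a 1` for all
`n ≥ 1`.  Then `(a n)` is a Dold sequence if and only if every `c n` (for `n ≥ 1`) is an
integer. -/
theorem dold_iff_generating_integral (a : ℕ → ℤ) (c : ℕ → ℚ)
    (hc : ∀ n : ℕ, 1 ≤ n →
      (n : ℚ) * c n = (a n : ℚ) - ∑ i ∈ Finset.Ico 1 n, c i * (a (n - i) : ℚ)) :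
    DoldSeq a ↔ ∀ n : ℕ, 1 ≤ n → ∃ k : ℤ, c n = (k : ℚ) :=
  dold_iff_generating_integral_general hc
end

section
/- A sequence (a_n)_{n≥1} of integers is a Dold sequence if and only if for every n ≥ 1, n divides ∑_{d|n} φ(n/d)·a_d, where φ is the Euler totient function. -/
/-!
Multiplying the `n`-th value by `n` is compatible with Dirichlet convolution, because `n ↦ n` is
completely multiplicative. It sends `ζ` to `id` and hence `μ` to the inverse of `id`, so convolution
with `id` permutes its range, the set of arithmetic functions `f` with `n ∣ f n` for all `n ≥ 1`.
Since `φ = id * μ`, the function `μ * a` lies in that range if and only if `φ * a` does.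
-/

section

open ArithmeticFunction
open scoped ArithmeticFunction.zeta ArithmeticFunction.Moebius

section IndexMul

variable {R M : Type*}

/-- The twist `n ↦ n • f n` of an arithmetic function `f`. The condition that `n` divides the `n`-th
value of a function, for every `n`, is encoded as membership in the range of this map. -/
def indexMul [AddMonoid M] (f : ArithmeticFunction M) : ArithmeticFunction M :=
  ⟨fun n ↦ n • f n, zero_nsmul _⟩

@[simp]
lemma indexMul_apply [AddMonoid M] (f : ArithmeticFunction M) (n : ℕ) :
    indexMul f n = n • f n :=
  rfl

lemma mem_range_indexMul_iff [AddMonoid M] {f : ArithmeticFunction M} :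
    f ∈ Set.range indexMul ↔ ∀ n, 1 ≤ n → ∃ x, f n = n • x := by
  constructor
  · rintro ⟨g, rfl⟩ n -
    exact ⟨g n, rfl⟩
  · intro h
    choose! x hx using h
    refine ⟨toArithmeticFunction x, ArithmeticFunction.ext fun n ↦ ?_⟩
    rcases Nat.eq_zero_or_pos n with rfl | hn
    · rw [ArithmeticFunction.map_zero, ArithmeticFunction.map_zero]
    · rw [indexMul_apply, hx n hn, toArithmeticFunction, coe_mk, if_neg hn.ne']

lemma indexMul_smul [Semiring R] [AddCommMonoid M] [Module R M]
    (f : ArithmeticFunction R) (g : ArithmeticFunction M) :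
    indexMul (f • g) = indexMul f • indexMul g := by
  ext n
  simp only [indexMul_apply, ArithmeticFunction.smul_apply, Finset.smul_sum]
  refine Finset.sum_congr rfl fun p hp ↦ ?_
  rw [← (Nat.mem_divisorsAntidiagonal.mp hp).1, smul_smul_smul_comm, smul_eq_mul]

lemma indexMul_one [AddMonoidWithOne R] : indexMul (1 : ArithmeticFunction R) = 1 := by
  ext n
  by_cases hn : n = 1 <;> simp [hn]

lemma indexMul_zeta [AddMonoidWithOne R] :
    indexMul (ζ : ArithmeticFunction R) = (.id : ArithmeticFunction ℕ) := by
  ext n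
  by_cases hn : n = 0 <;> simp [hn]

lemma indexMul_moebius_mul_id [Ring R] :
    indexMul (μ : ArithmeticFunction R) * (.id : ArithmeticFunction ℕ) = 1 := by
  rw [← indexMul_zeta, ← smul_eq_mul, ← indexMul_smul, smul_eq_mul, coe_moebius_mul_coe_zeta,
    indexMul_one]

lemma id_smul_mem_range_indexMul_iff [Ring R] [AddCommMonoid M] [Module R M]
    {f : ArithmeticFunction M} :
    ((.id : ArithmeticFunction ℕ) : ArithmeticFunction R) • f ∈ Set.range indexMul ↔
      f ∈ Set.range indexMul := by
  constructor
  · rintro ⟨g, hg⟩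
    exact ⟨(μ : ArithmeticFunction R) • g, by
      rw [indexMul_smul, hg, ← mul_smul, indexMul_moebius_mul_id, one_smul]⟩
  · rintro ⟨g, rfl⟩
    exact ⟨(ζ : ArithmeticFunction R) • g, by rw [indexMul_smul, indexMul_zeta]⟩

end IndexMul

/-- Euler's totient function `φ` as an arithmetic function, for use in Dirichlet convolutions. -/
def eulerTotient : ArithmeticFunction ℕ :=
  ⟨Nat.totient, Nat.totient_zero⟩

@[simp]
lemma eulerTotient_apply (n : ℕ) : eulerTotient n = n.totient :=
  rfl

lemma eulerTotient_mul_zeta : eulerTotient * ζ = .id := by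
  ext n
  simp only [mul_zeta_apply, eulerTotient_apply, n.sum_totient, id_apply]

lemma coe_eulerTotient_eq_id_mul_moebius {R : Type*} [Ring R] :
    (eulerTotient : ArithmeticFunction R) = (.id : ArithmeticFunction ℕ) * μ := by
  rw [← eulerTotient_mul_zeta, natCoe_mul, mul_assoc, coe_zeta_mul_coe_moebius, mul_one]

lemma smul_toArithmeticFunction_apply {R M : Type*} [Semiring R] [AddCommMonoid M] [Module R M]
    (f : ArithmeticFunction R) (a : ℕ → M) (n : ℕ) :
    (f • toArithmeticFunction a) n = ∑ d ∈ n.divisors, f (n / d) • a d := by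
  rw [ArithmeticFunction.smul_apply,
    Nat.sum_divisorsAntidiagonal' fun k d ↦ f k • toArithmeticFunction a d]
  refine Finset.sum_congr rfl fun d hd ↦ ?_
  simp [toArithmeticFunction, (Nat.pos_of_mem_divisors hd).ne']

theorem dold_iff_totient_general {M : Type*} [AddCommGroup M] (a : ℕ → M) :
    (∀ n : ℕ, 1 ≤ n → ∃ x, ∑ d ∈ n.divisors, μ (n / d) • a d = n • x) ↔
      ∀ n : ℕ, 1 ≤ n → ∃ x, ∑ d ∈ n.divisors, Nat.totient (n / d) • a d = n • x := by
  have totient_smul (n : ℕ) : ∑ d ∈ n.divisors, Nat.totient (n / d) • a d =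
      ((eulerTotient : ArithmeticFunction ℤ) • toArithmeticFunction a) n := by
    simp only [smul_toArithmeticFunction_apply, natCoe_apply, eulerTotient_apply,
      natCast_zsmul]
  simp only [totient_smul, ← smul_toArithmeticFunction_apply, ← mem_range_indexMul_iff]
  rw [coe_eulerTotient_eq_id_mul_moebius, intCoe_int, mul_smul, id_smul_mem_range_indexMul_iff]

end

/-- A sequence of integers is a Dold sequence if and only if for every `n ≥ 1`,
`n` divides `∑_{d ∣ n} φ(n/d) · a d`, where `φ` is the Euler totient function. -/
theorem dold_iff_totient (a : ℕ → ℤ) :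
    DoldSeq a ↔
      ∀ n : ℕ, 1 ≤ n →
        (n : ℤ) ∣ ∑ d ∈ n.divisors, (Nat.totient (n / d) : ℤ) * a d := by
  simpa only [DoldSeq, dvd_def, smul_eq_mul, nsmul_eq_mul] using dold_iff_totient_general a
end

section
/- Let ψ : ℕ → ℤ be a function satisfying ψ(1) = 1 or ψ(1) = −1, and such that for every n ≥ 1, n divides ∑_{k|n} ψ(k). Then a sequence (a_n)_{n≥1} of integers is a Dold sequence if and only if for every n ≥ 1, n divides ∑_{k|n} ψ(n/k)·a_k. -/
/-!
If `g` is completely multiplicative, then multiplying pointwise by `g` respects Dirichlet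
convolution, so the arithmetic functions `f` with `g n ∣ f n` for all `n ≥ 1` form a monoid under
convolution. A member whose value at `1` is a unit has its Dirichlet inverse in this monoid too,
so convolving with it neither creates nor destroys membership. Apply this to the member `ψ * ζ`
and note that `(ψ * ζ) * (μ * a) = ψ * a`.
-/

open scoped ArithmeticFunction.Moebius ArithmeticFunction.zeta

section Twist

variable {R : Type*} [CommSemiring R]

/-- The twist `n ↦ g n * f n` of an arithmetic function `f` by a completely multiplicative `g`, as
an endomorphism of the monoid of arithmetic functions under Dirichlet convolution. Its range
encodes the divisibilities `g n ∣ f n`. -/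
def dirichletTwist (g : ℕ →* R) : ArithmeticFunction R →* ArithmeticFunction R where
  toFun f := ⟨fun n ↦ g n * f n, by simp⟩
  map_one' := by
    ext n
    by_cases hn : n = 1 <;> simp [hn]
  map_mul' f h := by
    ext n
    simp only [ArithmeticFunction.mul_apply, ArithmeticFunction.coe_mk, Finset.mul_sum]
    refine Finset.sum_congr rfl fun p hp ↦ ?_
    rw [← (Nat.mem_divisorsAntidiagonal.mp hp).1, map_mul]
    exact mul_mul_mul_comm (g p.1) (g p.2) (f p.1) (h p.2)

theorem dirichletTwist_apply (g : ℕ →* R) (f : ArithmeticFunction R) (n : ℕ) :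
    dirichletTwist g f n = g n * f n :=
  rfl

theorem mem_mrange_dirichletTwist {g : ℕ →* R} {f : ArithmeticFunction R} :
    f ∈ MonoidHom.mrange (dirichletTwist g) ↔ ∀ n, 1 ≤ n → g n ∣ f n := by
  constructor
  · rintro ⟨q, rfl⟩ n -
    exact dvd_mul_right (g n) (q n)
  · intro hf
    choose! q hq using hf
    refine ⟨toArithmeticFunction q, ?_⟩
    ext n
    rcases n.eq_zero_or_pos with rfl | hn
    · simp only [ArithmeticFunction.map_zero]
    · rw [dirichletTwist_apply, hq n hn]
      exact congrArg (g n * ·) (if_neg hn.ne')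

end Twist

theorem mul_mem_mrange_dirichletTwist_iff {R : Type*} [CommRing R] {g : ℕ →* R}
    {F b : ArithmeticFunction R} (hF1 : IsUnit (F 1))
    (hF : F ∈ MonoidHom.mrange (dirichletTwist g)) :
    F * b ∈ MonoidHom.mrange (dirichletTwist g) ↔ b ∈ MonoidHom.mrange (dirichletTwist g) := by
  refine ⟨fun hFb ↦ ?_, mul_mem hF⟩
  obtain ⟨q, rfl⟩ := hF
  have hq : IsUnit q := by
    rw [ArithmeticFunction.isUnit_iff_isUnit_apply_one]
    rwa [dirichletTwist_apply, map_one, one_mul] at hF1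
  obtain ⟨r, hrq⟩ := hq.exists_left_inv
  have hb : dirichletTwist g r * (dirichletTwist g q * b) = b := by
    rw [← mul_assoc, ← map_mul, hrq, map_one, one_mul]
  rw [← hb]
  exact mul_mem ⟨r, rfl⟩ hFb

theorem toArithmeticFunction_mul_apply {R : Type*} [Semiring R] (f h : ℕ → R) (n : ℕ) :
    (toArithmeticFunction f * toArithmeticFunction h) n =
      ∑ d ∈ n.divisors, f (n / d) * h d := by
  rw [← Nat.sum_divisorsAntidiagonal' fun x y ↦ f x * h y]
  exact congrFun (LSeries.convolution_def f h) n

theorem toArithmeticFunction_mul_zeta_apply {R : Type*} [Semiring R] (f : ℕ → R) (n : ℕ) :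
    (toArithmeticFunction f * (ζ : ArithmeticFunction R)) n = ∑ d ∈ n.divisors, f d := by
  rw [ArithmeticFunction.coe_mul_zeta_apply]
  exact Finset.sum_congr rfl fun d hd ↦ if_neg (Nat.pos_of_mem_divisors hd).ne'

theorem dold_iff_psi_general {R : Type*} [CommRing R] (g : ℕ →* R) (ψ : ℕ → R)
    (hψ1 : IsUnit (ψ 1)) (hψ2 : ∀ n : ℕ, 1 ≤ n → g n ∣ ∑ k ∈ n.divisors, ψ k) (a : ℕ → R) :
    (∀ n : ℕ, 1 ≤ n → g n ∣ ∑ d ∈ n.divisors, (μ (n / d) : R) * a d) ↔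
      ∀ n : ℕ, 1 ≤ n → g n ∣ ∑ k ∈ n.divisors, ψ (n / k) * a k := by
  let P := toArithmeticFunction ψ
  let A := toArithmeticFunction a
  have hF1 : IsUnit ((P * (ζ : ArithmeticFunction R)) 1) := by
    simpa only [P, toArithmeticFunction_mul_zeta_apply, Nat.divisors_one, Finset.sum_singleton]
      using hψ1
  have hF : P * (ζ : ArithmeticFunction R) ∈ MonoidHom.mrange (dirichletTwist g) := by
    simpa only [P, mem_mrange_dirichletTwist, toArithmeticFunction_mul_zeta_apply] using hψ2
  have hPA : P * (ζ : ArithmeticFunction R) * ((μ : ArithmeticFunction R) * A) = P * A := by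
    rw [mul_assoc, ← mul_assoc (ζ : ArithmeticFunction R),
      ArithmeticFunction.coe_zeta_mul_coe_moebius, one_mul]
  have hμA (n : ℕ) : ((μ : ArithmeticFunction R) * A) n =
      ∑ d ∈ n.divisors, (μ (n / d) : R) * a d := by
    rw [← ArithmeticFunction.toArithmeticFunction_eq_self (μ : ArithmeticFunction R),
      toArithmeticFunction_mul_apply]
    simp only [ArithmeticFunction.intCoe_apply]
  simpa only [hPA, mem_mrange_dirichletTwist, hμA, P, A, toArithmeticFunction_mul_apply] using
    (mul_mem_mrange_dirichletTwist_iff (b := (μ : ArithmeticFunction R) * A) hF1 hF).symm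

/-- (Wójcik) Let `ψ : ℕ → ℤ` satisfy `ψ(1) = ±1` and `n ∣ ∑_{k ∣ n} ψ(k)` for all
`n ≥ 1`.  Then `(a n)` is a Dold sequence if and only if `n ∣ ∑_{k ∣ n} ψ(n/k)·a k`
for all `n ≥ 1`. -/
theorem dold_iff_psi (ψ : ℕ → ℤ)
    (hψ1 : ψ 1 = 1 ∨ ψ 1 = -1)
    (hψ2 : ∀ n : ℕ, 1 ≤ n → (n : ℤ) ∣ ∑ k ∈ n.divisors, ψ k)
    (a : ℕ → ℤ) :
    DoldSeq a ↔
      ∀ n : ℕ, 1 ≤ n → (n : ℤ) ∣ ∑ k ∈ n.divisors, ψ (n / k) * a k :=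
  dold_iff_psi_general (Nat.castRingHom ℤ : ℕ →* ℤ) ψ (Int.isUnit_iff.mpr hψ1) hψ2 a
end

section
/- Let (a_n)_{n≥1} be a sequence of non-negative integers. There exist a set X and a map T : X → X such that for every n ≥ 1 the set {x ∈ X : T^n(x) = x} is finite of cardinality a_n, if and only if for every n ≥ 1 the integer ∑_{d|n} μ(n/d)·a_d is non-negative and divisible by n. -/
/-!
The points fixed by `T^n` are those whose minimal period divides `n`, so by Möbius inversion the
Möbius sum of the fixed-point counts is the number of points of minimal period exactly `n`. These
points split into orbits of size `n`. Conversely, if the `n`-th Möbius sum is `n * c n`, take the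
disjoint union, over all `n`, of `c n` cycles of length `n`.
-/

section PeriodicPoints

open Function

variable {α : Type*} {f : α → α} {x y : α} {n : ℕ}

/-- The set of points of `f` whose minimal period is exactly `n`, as opposed to
`Function.ptsOfPeriod`, where the minimal period is only required to divide `n`. Following
`Function.minimalPeriod`, the points that are not periodic are those of minimal period `0`. -/
def ptsOfMinimalPeriod (f : α → α) (n : ℕ) : Set α :=
  {x | minimalPeriod f x = n}

theorem mem_ptsOfMinimalPeriod : x ∈ ptsOfMinimalPeriod f n ↔ minimalPeriod f x = n :=
  Iff.rfl

theorem ptsOfMinimalPeriod_subset_ptsOfPeriod (f : α → α) (n : ℕ) :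
    ptsOfMinimalPeriod f n ⊆ ptsOfPeriod f n :=
  fun _ hx => isPeriodicPt_iff_minimalPeriod_dvd.2 hx.dvd

theorem pairwise_disjoint_ptsOfMinimalPeriod (f : α → α) :
    Pairwise (Disjoint on ptsOfMinimalPeriod f) :=
  fun _ _ hne => Set.disjoint_left.2 fun _ hx hy => hne (hx.symm.trans hy)

theorem ptsOfPeriod_eq_biUnion_divisors (f : α → α) (hn : n ≠ 0) :
    ptsOfPeriod f n = ⋃ d ∈ n.divisors, ptsOfMinimalPeriod f d := by
  ext x
  simp [mem_ptsOfMinimalPeriod, isPeriodicPt_iff_minimalPeriod_dvd, hn]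

theorem ncard_ptsOfPeriod (hn : n ≠ 0)
    (hfin : ∀ d ∈ n.divisors, (ptsOfMinimalPeriod f d).Finite) :
    (ptsOfPeriod f n).ncard = ∑ d ∈ n.divisors, (ptsOfMinimalPeriod f d).ncard := by
  rw [ptsOfPeriod_eq_biUnion_divisors f hn, ← finsum_mem_coe_finset]
  exact n.divisors.finite_toSet.ncard_biUnion hfin
    ((pairwise_disjoint_ptsOfMinimalPeriod f).set_pairwise _)

theorem ncard_setOf_mem_periodicOrbit (f : α → α) (x : α) :
    {y | y ∈ periodicOrbit f x}.ncard = minimalPeriod f x := by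
  have eq_image : {y | y ∈ periodicOrbit f x} = (f^[·] x) '' Set.Iio (minimalPeriod f x) := by
    ext y
    simp [periodicOrbit_def, eq_comm]
  rw [eq_image, iterate_injOn_Iio_minimalPeriod.ncard_image, Set.ncard_Iio_nat]

theorem mem_periodicOrbit_iff_periodicOrbit_eq (hx : x ∈ periodicPts f) :
    y ∈ periodicOrbit f x ↔ periodicOrbit f y = periodicOrbit f x := by
  constructor
  · intro hy
    obtain ⟨k, rfl⟩ := (mem_periodicOrbit_iff hx).1 hy
    exact periodicOrbit_apply_iterate_eq hx k
  · intro h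
    have hy : y ∈ periodicPts f := by
      by_contra hy
      rw [periodicOrbit_eq_nil_of_not_periodic_pt hy] at h
      exact periodicOrbit_eq_nil_iff_not_periodic_pt.1 h.symm hx
    exact h ▸ self_mem_periodicOrbit hy

theorem dvd_ncard_ptsOfMinimalPeriod (hn : 0 < n) (hfin : (ptsOfMinimalPeriod f n).Finite) :
    n ∣ (ptsOfMinimalPeriod f n).ncard := by
  classical
  rw [Set.ncard_eq_toFinset_card _ hfin, Finset.card_eq_sum_card_image (periodicOrbit f)]
  refine Finset.dvd_sum fun b hb => ?_
  obtain ⟨x, hx, rfl⟩ := Finset.mem_image.1 hb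
  have hxn : minimalPeriod f x = n := hfin.mem_toFinset.1 hx
  have hxp : x ∈ periodicPts f := minimalPeriod_pos_iff_mem_periodicPts.1 (hxn ▸ hn)
  have fiber_eq : ({y ∈ hfin.toFinset | periodicOrbit f y = periodicOrbit f x} : Set α) =
      {y | y ∈ periodicOrbit f x} := by
    ext y
    rw [Set.mem_ofPred_eq, Set.mem_ofPred_eq, hfin.mem_toFinset, mem_ptsOfMinimalPeriod,
      mem_periodicOrbit_iff_periodicOrbit_eq hxp, and_iff_right_iff_imp]
    intro h
    rw [← periodicOrbit_length, h, periodicOrbit_length, hxn]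
  rw [← Set.ncard_coe_finset, Finset.coe_filter, fiber_eq, ncard_setOf_mem_periodicOrbit, hxn]

end PeriodicPoints

section Realizes

open Function ArithmeticFunction

theorem sum_divisors_eq_iff_sum_moebius_mul_eq {R : Type*} [NonAssocRing R] {f g : ℕ → R} :
    (∀ n > 0, ∑ d ∈ n.divisors, f d = g n) ↔
      ∀ n > 0, ∑ d ∈ n.divisors, (moebius (n / d) : R) * g d = f n := by
  rw [sum_eq_iff_sum_mul_moebius_eq]
  simp only [Nat.sum_divisorsAntidiagonal' fun i j => (moebius i : R) * g j]

/-- The map `f` realizes the sequence `a` if, for every `n ≥ 1`, its `n`-th iterate has exactly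
`a n` fixed points. Finiteness is required separately because `Set.ncard` is `0` on infinite
sets. -/
def Realizes {α : Type*} (f : α → α) (a : ℕ → ℕ) : Prop :=
  ∀ n, 1 ≤ n → (ptsOfPeriod f n).Finite ∧ (ptsOfPeriod f n).ncard = a n

theorem realizes_iff_ncard_ptsOfMinimalPeriod_eq {α : Type*} {f : α → α} {a : ℕ → ℕ} :
    Realizes f a ↔ ∀ n, 1 ≤ n → (ptsOfMinimalPeriod f n).Finite ∧
      ∑ d ∈ n.divisors, moebius (n / d) * (a d : ℤ) = (ptsOfMinimalPeriod f n).ncard := by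
  have finite_iff : (∀ n, 1 ≤ n → (ptsOfPeriod f n).Finite) ↔
      ∀ n, 1 ≤ n → (ptsOfMinimalPeriod f n).Finite := by
    refine ⟨fun h n hn => (h n hn).subset (ptsOfMinimalPeriod_subset_ptsOfPeriod f n),
      fun h n hn => ?_⟩
    rw [ptsOfPeriod_eq_biUnion_divisors f (Nat.ne_of_gt hn)]
    exact n.divisors.finite_toSet.biUnion fun d hd => h d (Nat.pos_of_mem_divisors hd)
  simp only [Realizes, forall_and, finite_iff]
  refine and_congr_right fun hfin => ?_
  have moebius_inversion := sum_divisors_eq_iff_sum_moebius_mul_eq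
    (f := fun n => ((ptsOfMinimalPeriod f n).ncard : ℤ)) (g := fun n => (a n : ℤ))
  refine Iff.trans (forall₂_congr fun n hn => ?_) moebius_inversion
  rw [ncard_ptsOfPeriod (Nat.ne_of_gt hn) fun d hd => hfin d (Nat.pos_of_mem_divisors hd)]
  norm_cast

end Realizes

section DisjointCycles

open Function

theorem minimalPeriod_sigmaMap_id {ι : Type*} {β : ι → Type*} (g : ∀ i, β i → β i) (i : ι)
    (y : β i) : minimalPeriod (Sigma.map id g) ⟨i, y⟩ = minimalPeriod (g i) y := by
  refine minimalPeriod_eq_minimalPeriod_iff.2 fun n => ?_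
  have semiconj_mk : Semiconj (Sigma.mk i) (g i) (Sigma.map id g) := fun _ => rfl
  rw [IsPeriodicPt, IsFixedPt, ← (semiconj_mk.iterate_right n).eq, sigma_mk_injective.eq_iff,
    IsPeriodicPt, IsFixedPt]

theorem minimalPeriod_add_right {M : Type*} [AddLeftCancelMonoid M] (a x : M) :
    minimalPeriod (· + a) x = addOrderOf a := by
  refine minimalPeriod_eq_minimalPeriod_iff.2 fun n => ?_
  rw [isPeriodicPt_add_iff_nsmul_eq_zero, IsPeriodicPt, IsFixedPt, add_right_iterate_apply,
    add_eq_left]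

/-- The disjoint union, over all `d`, of `c d` cycles of length `d`, each of them being the
translation by `1` on `ZMod d`. For `d = 0` this adds `c 0` copies of the translation on `ℤ`,
which has no periodic points. -/
def disjointCycles (c : ℕ → ℕ) :
    (Σ d : ℕ, Fin (c d) × ZMod d) → Σ d : ℕ, Fin (c d) × ZMod d :=
  Sigma.map id fun d => Prod.map id fun z => (z + 1 : ZMod d)

variable (c : ℕ → ℕ)

theorem minimalPeriod_disjointCycles (x : Σ d : ℕ, Fin (c d) × ZMod d) :
    minimalPeriod (disjointCycles c) x = x.1 := by
  rw [disjointCycles, minimalPeriod_sigmaMap_id, minimalPeriod_prodMap, minimalPeriod_id,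
    minimalPeriod_add_right, ZMod.addOrderOf_one, Nat.lcm_one_left]

theorem ptsOfMinimalPeriod_disjointCycles (n : ℕ) :
    ptsOfMinimalPeriod (disjointCycles c) n = Set.range (Sigma.mk n) := by
  rw [Set.range_sigmaMk]
  ext x
  rw [mem_ptsOfMinimalPeriod, minimalPeriod_disjointCycles, Set.mem_preimage,
    Set.mem_singleton_iff]

theorem finite_ptsOfMinimalPeriod_disjointCycles (n : ℕ) [NeZero n] :
    (ptsOfMinimalPeriod (disjointCycles c) n).Finite := by
  rw [ptsOfMinimalPeriod_disjointCycles]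
  exact Set.finite_range _

theorem ncard_ptsOfMinimalPeriod_disjointCycles (n : ℕ) :
    (ptsOfMinimalPeriod (disjointCycles c) n).ncard = n * c n := by
  rw [ptsOfMinimalPeriod_disjointCycles, ← Nat.card_coe_set_eq,
    Nat.card_range_of_injective sigma_mk_injective, Nat.card_prod, Nat.card_fin, Nat.card_zmod,
    mul_comm]

end DisjointCycles

/-- A sequence of non-negative integers is realizable by a map `T` of a set `X` (meaning
`a n` counts the points fixed by the `n`-th iterate of `T`) if and only if, for every
`n ≥ 1`, the Möbius sum `∑_{d ∣ n} μ(n/d)·a d` is non-negative and divisible by `n`. -/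
theorem realizable_iff_moebius_sum_nonneg_and_dvd (a : ℕ → ℕ) :
    (∃ (X : Type) (T : X → X), ∀ n : ℕ, 1 ≤ n →
        {x : X | T^[n] x = x}.Finite ∧ {x : X | T^[n] x = x}.ncard = a n) ↔
      ∀ n : ℕ, 1 ≤ n →
        0 ≤ (∑ d ∈ n.divisors, ArithmeticFunction.moebius (n / d) * (a d : ℤ)) ∧
        (n : ℤ) ∣ ∑ d ∈ n.divisors, ArithmeticFunction.moebius (n / d) * (a d : ℤ) := by
  constructor
  · rintro ⟨X, T, hT : Realizes T a⟩ n hn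
    obtain ⟨hfin, hsum⟩ := realizes_iff_ncard_ptsOfMinimalPeriod_eq.1 hT n hn
    rw [hsum]
    exact ⟨Int.natCast_nonneg _, Int.natCast_dvd_natCast.2 (dvd_ncard_ptsOfMinimalPeriod hn hfin)⟩
  · intro h
    let c : ℕ → ℕ := fun n =>
      ((∑ d ∈ n.divisors, ArithmeticFunction.moebius (n / d) * (a d : ℤ)) / n).toNat
    refine ⟨_, disjointCycles c, realizes_iff_ncard_ptsOfMinimalPeriod_eq.2 fun n hn => ?_⟩
    obtain ⟨hnonneg, hdvd⟩ := h n hn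
    have : NeZero n := ⟨Nat.ne_of_gt hn⟩
    refine ⟨finite_ptsOfMinimalPeriod_disjointCycles c n, ?_⟩
    rw [ncard_ptsOfMinimalPeriod_disjointCycles, Nat.cast_mul,
      Int.toNat_of_nonneg (Int.ediv_nonneg hnonneg (Int.natCast_nonneg n)),
      Int.mul_ediv_cancel' hdvd]
end

section
/- Let A be an m × m matrix with non-negative integer entries. Then the sequence (trace(A^n))_{n≥1} is realizable; that is, for every n ≥ 1 the integer ∑_{d|n} μ(n/d)·trace(A^d) is non-negative and divisible by n. -/
/-!
A non-negative integer matrix `A` counts the edges of a finite directed multigraph, and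
`trace (A ^ n)` counts its closed walks of length `n`, that is, the points of the edge shift fixed
by the `n`-th iterate. Möbius inversion turns these numbers into the numbers of points of minimal
period exactly `n`, and those points fall into orbits of size `n`.

To count closed walks, factor `A = S * T` through the edges, with `S` and `T` the incidence
matrices of sources and targets. Then `trace (A ^ n) = trace ((T * S) ^ n)`, and `T * S` is the
`0`-`1` matrix of the relation of consecutiveness on edges.
-/

open Function
open scoped ArithmeticFunction.Moebius

section PeriodicPoints

variable {X : Type*} {n : ℕ}

theorem dvd_natCard_of_forall_minimalPeriod_eq (σ : Equiv.Perm X)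
    (hσ : ∀ x, minimalPeriod σ x = n) : n ∣ Nat.card X := by
  obtain _ | ⟨⟨x₀⟩⟩ := isEmpty_or_nonempty X
  · simp
  have zpow_fixes_iff (x : X) (k : ℤ) : (σ ^ k) x = x ↔ (n : ℤ) ∣ k := by
    rw [← hσ x]
    exact MulAction.zpow_smul_eq_iff_minimalPeriod_dvd (a := σ)
  have stabilizer_eq_bot (x : X) : MulAction.stabilizer (Subgroup.zpowers σ) x = ⊥ := by
    rw [Subgroup.eq_bot_iff_forall]
    rintro ⟨_, k, rfl⟩ (hk : (σ ^ k) x = x)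
    exact Subtype.ext <| Equiv.ext fun y ↦
      (zpow_fixes_iff y k).2 ((zpow_fixes_iff x k).1 hk)
  have dvd_orderOf : n ∣ orderOf σ := by
    rw [← Int.natCast_dvd_natCast, ← zpow_fixes_iff x₀, zpow_natCast, pow_orderOf_eq_one]
    rfl
  rw [Nat.card_congr (MulAction.selfEquivOrbitsQuotientProd stabilizer_eq_bot), Nat.card_prod,
    Nat.card_zpowers]
  exact dvd_mul_of_dvd_right dvd_orderOf _

theorem bijOn_setOf_minimalPeriod_eq (T : X → X) (hn : n ≠ 0) :
    Set.BijOn T {x | minimalPeriod T x = n} {x | minimalPeriod T x = n} := by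
  have periodic {x : X} (hx : minimalPeriod T x = n) : x ∈ periodicPts T :=
    minimalPeriod_pos_iff_mem_periodicPts.1 (hx ▸ hn.pos)
  refine ⟨fun x hx ↦ (minimalPeriod_apply (periodic hx)).trans hx,
    (bijOn_periodicPts T).injOn.mono fun _ ↦ periodic, fun y hy ↦ ?_⟩
  obtain ⟨x, hx, rfl⟩ := (bijOn_periodicPts T).surjOn (periodic hy)
  exact ⟨x, (minimalPeriod_apply hx).symm.trans hy, rfl⟩

theorem minimalPeriod_eq_of_semiconj_of_injective {Y : Type*} {S : Y → Y} {T : X → X} {g : Y → X}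
    (hg : Injective g) (h : Semiconj g S T) (y : Y) :
    minimalPeriod S y = minimalPeriod T (g y) := by
  refine minimalPeriod_eq_minimalPeriod_iff.2 fun k ↦ ?_
  rw [IsPeriodicPt, IsFixedPt, IsPeriodicPt, IsFixedPt, ← h.iterate_right k y, hg.eq_iff]

theorem dvd_natCard_minimalPeriod_eq (T : X → X) (hn : n ≠ 0) :
    n ∣ Nat.card {x // minimalPeriod T x = n} := by
  refine dvd_natCard_of_forall_minimalPeriod_eq
    ((bijOn_setOf_minimalPeriod_eq T hn).equiv T) fun x ↦ ?_
  rw [minimalPeriod_eq_of_semiconj_of_injective Subtype.val_injective (fun _ ↦ rfl) x]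
  exact x.2

theorem sum_divisors_natCard_minimalPeriod_eq (T : X → X) (hn : n ≠ 0)
    (hfin : (ptsOfPeriod T n).Finite) :
    ∑ d ∈ n.divisors, Nat.card {x // minimalPeriod T x = d} = Nat.card (ptsOfPeriod T n) := by
  classical
  have mem_iff (x : X) : x ∈ hfin.toFinset ↔ minimalPeriod T x ∣ n := by
    rw [hfin.mem_toFinset, mem_ptsOfPeriod, isPeriodicPt_iff_minimalPeriod_dvd]
  rw [Nat.card_eq_card_finite_toFinset hfin,
    Finset.card_eq_sum_card_fiberwise (f := minimalPeriod T) (t := n.divisors)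
      fun x hx ↦ Nat.mem_divisors.2 ⟨(mem_iff x).1 hx, hn⟩]
  refine Finset.sum_congr rfl fun d hd ↦ Nat.subtype_card _ fun x ↦ ?_
  rw [Finset.mem_filter, mem_iff, and_iff_right_iff_imp]
  rintro rfl
  exact Nat.dvd_of_mem_divisors hd

theorem sum_moebius_mul_natCard_ptsOfPeriod (T : X → X) (hn : n ≠ 0)
    (hfin : (ptsOfPeriod T n).Finite) :
    ∑ d ∈ n.divisors, μ (n / d) * (Nat.card (ptsOfPeriod T d) : ℤ) =
      Nat.card {x // minimalPeriod T x = n} := by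
  have inversion := (ArithmeticFunction.sum_eq_iff_sum_smul_moebius_eq_on
    (f := fun d ↦ (Nat.card {x // minimalPeriod T x = d} : ℤ))
    (g := fun d ↦ (Nat.card (ptsOfPeriod T d) : ℤ))
    {d | d ∣ n} fun _ _ ↦ dvd_trans).1 fun d hd hdn ↦ by
      exact_mod_cast sum_divisors_natCard_minimalPeriod_eq T hd.ne'
        (hfin.subset fun x (hx : IsPeriodicPt T d x) ↦ hx.trans_dvd hdn)
  rw [← inversion n hn.pos dvd_rfl,
    Nat.sum_divisorsAntidiagonal' fun i j ↦ μ i • (Nat.card (ptsOfPeriod T j) : ℤ)]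
  simp only [smul_eq_mul]

/-- A sequence `(a n)` for `n ≥ 1` is realizable if it counts the points fixed by the iterates of
some map. This is encoded by the arithmetic criterion on its Möbius sums, which ignore `a 0`. -/
def IsRealizable (a : ℕ → ℕ) : Prop :=
  ∀ n : ℕ, 1 ≤ n →
    0 ≤ ∑ d ∈ n.divisors, μ (n / d) * (a d : ℤ) ∧
    (n : ℤ) ∣ ∑ d ∈ n.divisors, μ (n / d) * (a d : ℤ)

theorem IsRealizable.congr {a b : ℕ → ℕ} (ha : IsRealizable a) (hab : ∀ n ≠ 0, a n = b n) :
    IsRealizable b := by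
  intro n hn
  have sum_eq : ∑ d ∈ n.divisors, μ (n / d) * (a d : ℤ) =
      ∑ d ∈ n.divisors, μ (n / d) * (b d : ℤ) :=
    Finset.sum_congr rfl fun d hd ↦ by rw [hab d (Nat.pos_of_mem_divisors hd).ne']
  exact sum_eq ▸ ha n hn

theorem isRealizable_natCard_ptsOfPeriod (T : X → X) (hfin : ∀ n ≠ 0, (ptsOfPeriod T n).Finite) :
    IsRealizable fun n ↦ Nat.card (ptsOfPeriod T n) := by
  intro n hn
  have hn₀ : n ≠ 0 := Nat.one_le_iff_ne_zero.1 hn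
  rw [sum_moebius_mul_natCard_ptsOfPeriod T hn₀ (hfin n hn₀)]
  exact ⟨Int.natCast_nonneg _, Int.natCast_dvd_natCast.2 (dvd_natCard_minimalPeriod_eq T hn₀)⟩

end PeriodicPoints

section CyclicProducts

theorem fin_snoc_eq_cons_add_one {V : Type*} {n : ℕ} (x : Fin n → V) (i : V) (k : Fin (n + 1)) :
    Fin.snoc (α := fun _ ↦ V) x i k = Fin.cons (α := fun _ ↦ V) i x (k + 1) := by
  cases k using Fin.lastCases with
  | last => simp
  | cast k => simp

variable {V R : Type*} [Fintype V] [DecidableEq V] [CommSemiring R]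

/-- For a walk `i, x 0, …, x (n - 1), j`, `cons` lists the sources of its steps and `snoc` their
targets. -/
theorem matrix_pow_succ_apply_eq_sum_prod (M : Matrix V V R) (n : ℕ) (i j : V) :
    (M ^ (n + 1)) i j = ∑ x : Fin n → V, ∏ k : Fin (n + 1),
      M (Fin.cons (α := fun _ ↦ V) i x k) (Fin.snoc (α := fun _ ↦ V) x j k) := by
  induction n generalizing i with
  | zero => simp [Fin.snoc]
  | succ n ih =>
    rw [pow_succ', Matrix.mul_apply, ← (Fin.consEquiv fun _ ↦ V).sum_comp, Fintype.sum_prod_type]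
    refine Finset.sum_congr rfl fun v _ ↦ ?_
    rw [ih, Finset.mul_sum]
    refine Finset.sum_congr rfl fun x _ ↦ ?_
    change _ = ∏ k, M (Fin.cons (α := fun _ ↦ V) i (Fin.cons v x) k)
      (Fin.snoc (α := fun _ ↦ V) (Fin.cons v x) j k)
    rw [← Fin.cons_snoc_eq_snoc_cons]
    exact (Fin.prod_univ_succ fun k ↦ M (Fin.cons (α := fun _ ↦ V) i (Fin.cons v x) k)
      (Fin.cons (α := fun _ ↦ V) v (Fin.snoc (α := fun _ ↦ V) x j) k)).symm

theorem trace_pow_eq_sum_prod (M : Matrix V V R) (n : ℕ) [NeZero n] :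
    (M ^ n).trace = ∑ x : Fin n → V, ∏ k, M (x k) (x (k + 1)) := by
  obtain ⟨n, rfl⟩ := Nat.exists_eq_succ_of_ne_zero (NeZero.ne n)
  rw [← (Fin.consEquiv fun _ ↦ V).sum_comp, Fintype.sum_prod_type]
  simp only [Matrix.trace, Matrix.diag_apply, matrix_pow_succ_apply_eq_sum_prod,
    fin_snoc_eq_cons_add_one, Fin.consEquiv_apply]

theorem trace_pow_of_relation (r : V → V → Prop) [DecidableRel r] (n : ℕ) [NeZero n] :
    ((Matrix.of fun v w ↦ if r v w then (1 : R) else 0) ^ n).trace =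
      Nat.card {x : Fin n → V // ∀ k, r (x k) (x (k + 1))} := by
  rw [trace_pow_eq_sum_prod, Nat.card_eq_fintype_card, Fintype.card_subtype,
    ← Finset.sum_boole]
  simp only [Matrix.of_apply, Finset.prod_ite_zero, Finset.prod_const_one, Finset.mem_univ,
    true_imp_iff]

theorem trace_mul_pow_comm {W : Type*} [Fintype W] [DecidableEq W] (S : Matrix V W R)
    (T : Matrix W V R) {n : ℕ} (hn : n ≠ 0) : ((S * T) ^ n).trace = ((T * S) ^ n).trace := by
  have mul_pow_comm (k : ℕ) : T * (S * T) ^ k = (T * S) ^ k * T := by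
    induction k with
    | zero => simp
    | succ k ih => rw [pow_succ, ← Matrix.mul_assoc, ih, pow_succ]; simp only [Matrix.mul_assoc]
  obtain ⟨k, rfl⟩ := Nat.exists_eq_succ_of_ne_zero hn
  rw [pow_succ', Matrix.mul_assoc, Matrix.trace_mul_comm, mul_pow_comm, Matrix.mul_assoc, pow_succ]

end CyclicProducts

section MarkovShift

variable {E : Type*}

/-- The one-sided topological Markov chain of a relation `r`: the infinite sequences all of whose
consecutive terms are related by `r`. -/
abbrev MarkovShift (r : E → E → Prop) : Type _ :=
  {x : ℕ → E // ∀ k, r (x k) (x (k + 1))}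

/-- The left shift on a topological Markov chain, the map realizing the numbers of cycles of `r`. -/
def MarkovShift.shift (r : E → E → Prop) (x : MarkovShift r) : MarkovShift r :=
  ⟨fun k ↦ x.1 (k + 1), fun k ↦ x.2 (k + 1)⟩

theorem MarkovShift.iterate_shift_apply (r : E → E → Prop) (n : ℕ) (x : MarkovShift r) (k : ℕ) :
    ((shift r)^[n] x).1 k = x.1 (k + n) := by
  induction n generalizing x with
  | zero => rfl
  | succ n ih => rw [iterate_succ_apply, ih]; rfl

theorem MarkovShift.isPeriodicPt_shift_iff {r : E → E → Prop} {n : ℕ} {x : MarkovShift r} :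
    IsPeriodicPt (shift r) n x ↔ Periodic x.1 n := by
  rw [IsPeriodicPt, IsFixedPt, Subtype.ext_iff, funext_iff]
  simp only [iterate_shift_apply, Periodic]

theorem fin_val_add_one_eq_mod {n : ℕ} [NeZero n] (k : Fin n) :
    ((k + 1 : Fin n) : ℕ) = (k + 1) % n := by
  rw [Fin.val_add, Fin.val_one', Nat.add_mod_mod]

theorem fin_ofNat_succ (n : ℕ) [NeZero n] (k : ℕ) :
    Fin.ofNat n (k + 1) = Fin.ofNat n k + 1 :=
  Fin.ext <| by rw [fin_val_add_one_eq_mod]; exact (Nat.mod_add_mod k n 1).symm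

/-- The points of period `n` of a topological Markov chain, identified with the cycles of length `n`
of the relation. Cycles are indexed by `Fin n` with its addition modulo `n`. -/
def MarkovShift.ptsOfPeriodEquiv (r : E → E → Prop) (n : ℕ) [NeZero n] :
    ptsOfPeriod (shift r) n ≃ {x : Fin n → E // ∀ k, r (x k) (x (k + 1))} where
  toFun x := ⟨fun k ↦ x.1.1 k, fun k ↦ by
    beta_reduce
    rw [fin_val_add_one_eq_mod, (isPeriodicPt_shift_iff.1 x.2).map_mod_nat]
    exact x.1.2 k⟩
  invFun y := ⟨⟨fun k ↦ y.1 (Fin.ofNat n k), fun k ↦ by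
      beta_reduce
      rw [fin_ofNat_succ]
      exact y.2 _⟩,
    isPeriodicPt_shift_iff.2 fun k ↦ congrArg y.1 (Fin.ext (Nat.add_mod_right k n))⟩
  left_inv x := Subtype.ext <| Subtype.ext <| funext (isPeriodicPt_shift_iff.1 x.2).map_mod_nat
  right_inv y := Subtype.ext <| funext fun k ↦ congrArg y.1 (Fin.ofNat_val_eq_self k)

theorem isRealizable_trace_pow_of_relation [Fintype E] [DecidableEq E] (r : E → E → Prop)
    [DecidableRel r] :
    IsRealizable fun n ↦ ((Matrix.of fun e f ↦ if r e f then 1 else 0) ^ n).trace := by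
  refine (isRealizable_natCard_ptsOfPeriod (MarkovShift.shift r) fun n hn ↦ ?_).congr
    fun n hn ↦ ?_ <;> have : NeZero n := ⟨hn⟩
  · exact Set.finite_coe_iff.1 (Finite.of_equiv _ (MarkovShift.ptsOfPeriodEquiv r n).symm)
  · rw [trace_pow_of_relation, Nat.cast_id]
    exact Nat.card_congr (MarkovShift.ptsOfPeriodEquiv r n)

end MarkovShift

section Edges

variable {V : Type*}

/-- The edges of the directed multigraph having `A i j` edges from `i` to `j`. -/
abbrev Edge (A : Matrix V V ℕ) : Type _ :=
  Σ p : V × V, Fin (A p.1 p.2)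

variable {A : Matrix V V ℕ}

/-- The initial vertex of an edge. -/
def Edge.source (e : Edge A) : V := e.1.1

/-- The terminal vertex of an edge. -/
def Edge.target (e : Edge A) : V := e.1.2

variable [DecidableEq V]

/-- The incidence matrix of edges and their sources. -/
def sourceMatrix (A : Matrix V V ℕ) : Matrix V (Edge A) ℕ :=
  Matrix.of fun i e ↦ if e.source = i then 1 else 0

/-- The incidence matrix of edges and their targets. -/
def targetMatrix (A : Matrix V V ℕ) : Matrix (Edge A) V ℕ :=
  Matrix.of fun e j ↦ if e.target = j then 1 else 0

variable [Fintype V]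

theorem sourceMatrix_mul_targetMatrix (A : Matrix V V ℕ) :
    sourceMatrix A * targetMatrix A = A := by
  ext i j
  calc (sourceMatrix A * targetMatrix A) i j
      = ∑ p : V × V, ∑ _ : Fin (A p.1 p.2),
          (if p.1 = i then 1 else 0) * (if p.2 = j then 1 else 0) := Fintype.sum_sigma _
    _ = A i j := by simp [Fintype.sum_prod_type]

theorem targetMatrix_mul_sourceMatrix (A : Matrix V V ℕ) :
    targetMatrix A * sourceMatrix A =
      Matrix.of fun e f : Edge A ↦ if e.target = f.source then 1 else 0 := by
  ext e f
  simp [Matrix.mul_apply, sourceMatrix, targetMatrix, eq_comm]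

theorem trace_pow_nonneg_matrix_realizable_general (A : Matrix V V ℕ) :
    IsRealizable fun n ↦ (A ^ n).trace := by
  refine (isRealizable_trace_pow_of_relation fun e f : Edge A ↦ e.target = f.source).congr
    fun n hn ↦ ?_
  rw [← targetMatrix_mul_sourceMatrix, ← trace_mul_pow_comm _ _ hn, sourceMatrix_mul_targetMatrix]

end Edges

/-- If `A` is a square matrix with non-negative integer entries, then the sequence
`(trace (A ^ n))` is realizable: for every `n ≥ 1` the Möbius sum
`∑_{d ∣ n} μ(n/d)·trace (A ^ d)` is non-negative and divisible by `n`. -/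
theorem trace_pow_nonneg_matrix_realizable (m : ℕ) (A : Matrix (Fin m) (Fin m) ℕ) :
    ∀ n : ℕ, 1 ≤ n →
      0 ≤ (∑ d ∈ n.divisors, ArithmeticFunction.moebius (n / d) * ((A ^ d).trace : ℤ)) ∧
      (n : ℤ) ∣ ∑ d ∈ n.divisors, ArithmeticFunction.moebius (n / d) * ((A ^ d).trace : ℤ) :=
  trace_pow_nonneg_matrix_realizable_general A
end

section
/- Let B be a square matrix with integer entries. Then the sequence (trace(B^n))_{n≥1} is a Dold sequence; that is, for every n ≥ 1, n divides ∑_{d|n} μ(n/d)·trace(B^d). -/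
/-!
By Jacobi's formula, the zeta series `f = det (1 - X B)⁻¹` has logarithmic derivative
`X f' / f = ∑_{n ≥ 1} trace (B ^ n) X ^ n`. An integer power series with constant term `1` is,
modulo every power of `X`, a finite product of factors `(1 - X ^ k) ^ c` with `c ∈ ℤ`, and the
logarithmic derivative turns such products into sums. So it is enough that `1 - X ^ k` gives a Dold
sequence, namely `-k` on the multiples of `k` and `0` elsewhere.
-/

open PowerSeries
open scoped MatrixGroups

section IsDold

/-- Dold sequences of integers. The value at `0` is irrelevant. -/
def IsDold (a : ℕ → ℤ) : Prop :=
  ∀ n : ℕ, 1 ≤ n → (n : ℤ) ∣ ∑ d ∈ n.divisors, ArithmeticFunction.moebius (n / d) * a d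

variable {a b : ℕ → ℤ}

theorem isDold_zero : IsDold 0 := by
  simp [IsDold]

theorem IsDold.add (ha : IsDold a) (hb : IsDold b) : IsDold (a + b) := fun n hn ↦ by
  simpa only [Pi.add_apply, mul_add, Finset.sum_add_distrib] using dvd_add (ha n hn) (hb n hn)

theorem IsDold.neg (ha : IsDold a) : IsDold (-a) := fun n hn ↦ by
  simpa only [Pi.neg_apply, mul_neg, Finset.sum_neg_distrib, dvd_neg] using ha n hn

theorem IsDold.of_forall_exists_eq
    (h : ∀ n, ∃ b, IsDold b ∧ ∀ d, 1 ≤ d → d ≤ n → a d = b d) : IsDold a := fun n hn ↦ by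
  obtain ⟨b, hb, hab⟩ := h n
  rw [Finset.sum_congr rfl fun d hd ↦ by
    rw [hab d (Nat.pos_of_mem_divisors hd) (Nat.divisor_le hd)]]
  exact hb n hn

theorem IsDold.of_eq_sum_divisors (h : ∀ n, 1 ≤ n → a n = ∑ d ∈ n.divisors, d * b d) :
    IsDold a := fun n hn ↦ by
  have inversion := ArithmeticFunction.sum_eq_iff_sum_mul_moebius_eq.1
    (fun m hm ↦ (h m hm).symm) n hn
  simp only [Int.cast_id] at inversion
  rw [Nat.sum_divisorsAntidiagonal' (f := fun i j ↦ ArithmeticFunction.moebius i * a j)]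
    at inversion
  exact ⟨b n, inversion⟩

end IsDold

section LogDeriv

variable {A R ι : Type*} [CommSemiring A] [CommRing R] [Algebra A R] (D : Derivation A R R)

/-- The logarithmic derivative `D u / u` of a unit `u` with respect to a derivation `D`. -/
def unitLogDeriv (u : Rˣ) : R :=
  ↑u⁻¹ * D u

theorem unitLogDeriv_one : unitLogDeriv D 1 = 0 := by
  simp [unitLogDeriv]

theorem unitLogDeriv_mul (u v : Rˣ) :
    unitLogDeriv D (u * v) = unitLogDeriv D u + unitLogDeriv D v := by
  simp only [unitLogDeriv, mul_inv, Units.val_mul, Derivation.leibniz, smul_eq_mul]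
  linear_combination ((u⁻¹ : Rˣ) : R) * D u * v.inv_mul + ((v⁻¹ : Rˣ) : R) * D v * u.inv_mul

theorem unitLogDeriv_inv (u : Rˣ) : unitLogDeriv D u⁻¹ = -unitLogDeriv D u := by
  rw [eq_neg_iff_add_eq_zero, ← unitLogDeriv_mul, inv_mul_cancel, unitLogDeriv_one]

variable [DecidableEq ι]

theorem derivation_prod (s : Finset ι) (f : ι → R) :
    D (∏ i ∈ s, f i) = ∑ i ∈ s, (∏ j ∈ s.erase i, f j) * D (f i) := by
  induction s using Finset.induction_on with
  | empty => simp
  | insert a s ha ih =>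
    rw [Finset.prod_insert ha, Derivation.leibniz, ih, Finset.sum_insert ha,
      Finset.erase_insert ha, smul_eq_mul, smul_eq_mul, Finset.mul_sum, add_comm]
    congr 1
    refine Finset.sum_congr rfl fun i hi ↦ ?_
    have hai : a ≠ i := fun h ↦ ha (h ▸ hi)
    rw [Finset.erase_insert_of_ne hai, Finset.prod_insert (by simp [ha]), mul_assoc]

variable [Fintype ι]

theorem derivation_det_eq_sum_det_updateCol (M : Matrix ι ι R) :
    D M.det = ∑ i, (M.updateCol i fun j ↦ D (M j i)).det := by
  simp only [Matrix.det_apply, map_sum]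
  rw [Finset.sum_comm]
  refine Finset.sum_congr rfl fun σ _ ↦ ?_
  rw [← Finset.smul_sum, Units.smul_def, Units.smul_def, map_zsmul, derivation_prod]
  congr 1
  refine Finset.sum_congr rfl fun i _ ↦ ?_
  rw [← Finset.prod_erase_mul _ _ (Finset.mem_univ i), Matrix.updateCol_self]
  congr 1
  exact Finset.prod_congr rfl fun j hj ↦ (Matrix.updateCol_ne (Finset.ne_of_mem_erase hj)).symm

theorem derivation_det (M : Matrix ι ι R) : D M.det = (M.adjugate * M.map D).trace := by
  rw [derivation_det_eq_sum_det_updateCol]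
  refine Finset.sum_congr rfl fun i _ ↦ ?_
  rw [← Matrix.cramer_apply, Matrix.cramer_eq_adjugate_mulVec]
  rfl

theorem unitLogDeriv_det (M : GL ι R) :
    unitLogDeriv D M.det = ((M⁻¹ : GL ι R) * (M : Matrix ι ι R).map D).trace := by
  have inverse : ((M⁻¹ : GL ι R) : Matrix ι ι R) =
      ((M.det⁻¹ : Rˣ) : R) • (M : Matrix ι ι R).adjugate := by
    rw [Matrix.coe_units_inv, Matrix.inv_def, ← Matrix.GeneralLinearGroup.val_det_apply,
      Ring.inverse_unit]
  rw [unitLogDeriv, Matrix.GeneralLinearGroup.val_det_apply, derivation_det, inverse,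
    Matrix.smul_mul, Matrix.trace_smul, smul_eq_mul]

end LogDeriv

section EulerDerivation

variable (R : Type*) [CommRing R]

/-- The Euler derivation `X d/dX`. It is preferred to `d/dX` because it scales the coefficient of
`X ^ n` by `n` without shifting it. -/
noncomputable def eulerDerivation : Derivation R R⟦X⟧ R⟦X⟧ :=
  (X : R⟦X⟧) • derivative R

variable {R}

theorem coeff_eulerDerivation (f : R⟦X⟧) (n : ℕ) :
    coeff n (eulerDerivation R f) = n * coeff n f := by
  cases n with
  | zero => simp [eulerDerivation]
  | succ n => simp [eulerDerivation, coeff_succ_X_mul, coeff_derivative, mul_comm]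

theorem coeff_unitLogDeriv_eulerDerivation_of_X_pow_dvd {u : R⟦X⟧ˣ} {n d : ℕ}
    (hu : X ^ n ∣ (u : R⟦X⟧) - 1) (hd : d < n) :
    coeff d (unitLogDeriv (eulerDerivation R) u) = 0 := by
  suffices X ^ n ∣ eulerDerivation R (u : R⟦X⟧) from
    X_pow_dvd_iff.1 (this.mul_left _) d hd
  refine X_pow_dvd_iff.2 fun e he ↦ ?_
  have hcoeff := X_pow_dvd_iff.1 hu e he
  rw [coeff_eulerDerivation]
  rcases eq_or_ne e 0 with rfl | he0
  · simp
  · rw [map_sub, coeff_one, if_neg he0, sub_zero] at hcoeff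
    rw [hcoeff, mul_zero]

theorem mk_ite_dvd_mul_one_sub_X_pow {k : ℕ} (hk : 0 < k) :
    (mk fun d ↦ if k ∣ d then (1 : R) else 0) * (1 - X ^ k) = 1 := by
  ext d
  rw [mul_sub, mul_one, map_sub, coeff_mul_X_pow', coeff_mk, coeff_mk, coeff_one]
  rcases lt_or_ge d k with hdk | hkd
  · rw [if_neg hdk.not_ge, sub_zero]
    simp only [Nat.dvd_iff_mod_eq_zero, Nat.mod_eq_of_lt hdk]
  · rw [if_pos hkd, if_neg (hk.trans_le hkd).ne']
    simp only [Nat.dvd_sub_iff_left hkd dvd_rfl, sub_self]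

theorem coeff_unitLogDeriv_one_sub_X_pow {u : R⟦X⟧ˣ} {k : ℕ} (hk : 0 < k)
    (hu : (u : R⟦X⟧) = 1 - X ^ k) {d : ℕ} (hd : d ≠ 0) :
    coeff d (unitLogDeriv (eulerDerivation R) u) = -(if k ∣ d then (k : R) else 0) := by
  have euler : eulerDerivation R (u : R⟦X⟧) = (k : R) • ((u : R⟦X⟧) - 1) := by
    ext e
    rw [coeff_eulerDerivation, hu, sub_sub_cancel_left, coeff_smul, map_neg, map_sub, coeff_one,
      coeff_X_pow, smul_eq_mul]
    rcases eq_or_ne e 0 with rfl | he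
    · simp [hk.ne]
    · rcases eq_or_ne e k with rfl | hek <;> simp [*]
  have inverse : ((u⁻¹ : R⟦X⟧ˣ) : R⟦X⟧) = mk fun d ↦ if k ∣ d then (1 : R) else 0 :=
    Units.inv_eq_of_mul_eq_one_left (hu ▸ mk_ite_dvd_mul_one_sub_X_pow hk)
  rw [unitLogDeriv, euler, mul_smul_comm, mul_sub, mul_one, Units.inv_mul, inverse,
    coeff_smul, map_sub, coeff_one, if_neg hd, coeff_mk, zero_sub, smul_eq_mul, mul_neg, mul_ite,
    mul_one, mul_zero]

end EulerDerivation

section Factorization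

/-- The group of finite products of integral powers of the series `1 - X ^ k` with `k > 0`. It is
`X`-adically dense among the integer power series with constant term `1`. -/
noncomputable def oneSubXPowSubgroup : Subgroup ℤ⟦X⟧ˣ :=
  Subgroup.closure {v : ℤ⟦X⟧ˣ | ∃ k > 0, (v : ℤ⟦X⟧) = 1 - X ^ k}

theorem dvd_units_zpow_sub_one_add_mul {R : Type*} [CommRing R] {a ε : R} (hε : a ∣ ε ^ 2)
    {u : Rˣ} (hu : (u : R) = 1 + ε) (c : ℤ) : a ∣ ((u ^ c : Rˣ) : R) - (1 + c * ε) := by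
  induction c with
  | zero => simp
  | succ n ih =>
    have step : ((u ^ ((n : ℤ) + 1) : Rˣ) : R) - (1 + ((n : ℤ) + 1 : ℤ) * ε) =
        (((u ^ (n : ℤ) : Rˣ) : R) - (1 + (n : ℤ) * ε)) * u + n * ε ^ 2 := by
      rw [zpow_add_one, Units.val_mul, hu]
      push_cast
      ring
    exact step ▸ dvd_add (ih.mul_right _) (hε.mul_left _)
  | pred n ih =>
    rw [← (u.isUnit).dvd_mul_right]
    have step : (((u ^ (-(n : ℤ) - 1) : Rˣ) : R) - (1 + (-(n : ℤ) - 1 : ℤ) * ε)) * u =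
        (((u ^ (-(n : ℤ)) : Rˣ) : R) - (1 + (-(n : ℤ) : ℤ) * ε)) + (n + 1) * ε ^ 2 := by
      rw [sub_mul, ← Units.val_mul, zpow_sub_one, inv_mul_cancel_right, hu]
      push_cast
      ring
    exact step ▸ dvd_add ih (hε.mul_left _)

theorem X_pow_succ_dvd_mul_zpow_coeff_sub_one {u v : ℤ⟦X⟧ˣ} {k : ℕ} (hk : 0 < k)
    (hu : X ^ k ∣ (u : ℤ⟦X⟧) - 1) (hv : (v : ℤ⟦X⟧) = 1 - X ^ k) :
    X ^ (k + 1) ∣ ((u * v ^ coeff k (u : ℤ⟦X⟧) : ℤ⟦X⟧ˣ) : ℤ⟦X⟧) - 1 := by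
  set c : ℤ := coeff k (u : ℤ⟦X⟧) with hc
  have X_sq : (X ^ (k + 1) : ℤ⟦X⟧) ∣ (X ^ k) ^ 2 := by
    rw [← pow_mul]
    exact pow_dvd_pow X (by omega)
  have hu' : X ^ (k + 1) ∣ (u : ℤ⟦X⟧) - (1 + (c : ℤ⟦X⟧) * X ^ k) := by
    refine X_pow_dvd_iff.2 fun d hd ↦ ?_
    rw [← sub_sub, map_sub, ← map_intCast (C : ℤ →+* ℤ⟦X⟧), coeff_C_mul_X_pow]
    rcases Nat.lt_succ_iff_lt_or_eq.1 hd with hdk | rfl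
    · rw [X_pow_dvd_iff.1 hu d hdk, if_neg hdk.ne, sub_zero]
    · simp [hc, coeff_one, hk.ne']
  have hv' : X ^ (k + 1) ∣ ((v ^ c : ℤ⟦X⟧ˣ) : ℤ⟦X⟧) - (1 + (c : ℤ⟦X⟧) * -X ^ k) :=
    dvd_units_zpow_sub_one_add_mul (by rwa [neg_sq]) (hv.trans (sub_eq_add_neg _ _)) c
  have decomposition : ((u * v ^ c : ℤ⟦X⟧ˣ) : ℤ⟦X⟧) - 1 =
      ((u : ℤ⟦X⟧) - (1 + (c : ℤ⟦X⟧) * X ^ k)) * ((v ^ c : ℤ⟦X⟧ˣ) : ℤ⟦X⟧) +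
        (1 + (c : ℤ⟦X⟧) * X ^ k) * (((v ^ c : ℤ⟦X⟧ˣ) : ℤ⟦X⟧) - (1 + (c : ℤ⟦X⟧) * -X ^ k)) -
          (c : ℤ⟦X⟧) ^ 2 * (X ^ k) ^ 2 := by
    rw [Units.val_mul]
    ring
  rw [decomposition]
  exact dvd_sub (dvd_add (hu'.mul_right _) (hv'.mul_left _)) (X_sq.mul_left _)

theorem exists_mem_oneSubXPowSubgroup_X_pow_dvd {u : ℤ⟦X⟧ˣ}
    (hu : constantCoeff (u : ℤ⟦X⟧) = 1) (n : ℕ) :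
    ∃ v ∈ oneSubXPowSubgroup, X ^ (n + 1) ∣ ((u * v : ℤ⟦X⟧ˣ) : ℤ⟦X⟧) - 1 := by
  induction n with
  | zero => exact ⟨1, one_mem _, by simp [X_dvd_iff, hu]⟩
  | succ n ih =>
    obtain ⟨v, hv, huv⟩ := ih
    let w : ℤ⟦X⟧ˣ := Units.mkOfMulEqOne _ _
      ((mul_comm _ _).trans (mk_ite_dvd_mul_one_sub_X_pow (R := ℤ) n.succ_pos))
    have hw : w ∈ oneSubXPowSubgroup :=
      Subgroup.subset_closure ⟨n + 1, n.succ_pos, rfl⟩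
    refine ⟨_, mul_mem hv (zpow_mem hw (coeff (n + 1) ((u * v : ℤ⟦X⟧ˣ) : ℤ⟦X⟧))), ?_⟩
    rw [← mul_assoc]
    exact X_pow_succ_dvd_mul_zpow_coeff_sub_one n.succ_pos huv rfl

end Factorization

section DoldLogDeriv

theorem isDold_coeff_unitLogDeriv_of_eq_one_sub_X_pow {u : ℤ⟦X⟧ˣ} {k : ℕ} (hk : 0 < k)
    (hu : (u : ℤ⟦X⟧) = 1 - X ^ k) :
    IsDold fun n ↦ coeff n (unitLogDeriv (eulerDerivation ℤ) u) := by
  refine IsDold.of_eq_sum_divisors (b := fun d ↦ if d = k then -1 else 0) fun n hn ↦ ?_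
  have hn0 : n ≠ 0 := Nat.one_le_iff_ne_zero.1 hn
  rw [coeff_unitLogDeriv_one_sub_X_pow hk hu hn0]
  simp only [mul_ite, mul_neg, mul_one, mul_zero, Finset.sum_ite_eq', Nat.mem_divisors]
  split_ifs <;> simp_all

theorem isDold_coeff_unitLogDeriv_of_mem_oneSubXPowSubgroup {u : ℤ⟦X⟧ˣ}
    (hu : u ∈ oneSubXPowSubgroup) :
    IsDold fun n ↦ coeff n (unitLogDeriv (eulerDerivation ℤ) u) := by
  induction hu using Subgroup.closure_induction with
  | mem u hu =>
    obtain ⟨k, hk, huk⟩ := hu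
    exact isDold_coeff_unitLogDeriv_of_eq_one_sub_X_pow hk huk
  | one =>
    simp only [unitLogDeriv_one, map_zero]
    exact isDold_zero
  | mul u v _ _ hu hv =>
    simp only [unitLogDeriv_mul, map_add]
    exact hu.add hv
  | inv u _ hu =>
    simp only [unitLogDeriv_inv, map_neg]
    exact hu.neg

theorem isDold_coeff_unitLogDeriv {u : ℤ⟦X⟧ˣ} (hu : constantCoeff (u : ℤ⟦X⟧) = 1) :
    IsDold fun n ↦ coeff n (unitLogDeriv (eulerDerivation ℤ) u) := by
  refine IsDold.of_forall_exists_eq fun n ↦ ?_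
  obtain ⟨v, hv, huv⟩ := exists_mem_oneSubXPowSubgroup_X_pow_dvd hu n
  refine ⟨_, (isDold_coeff_unitLogDeriv_of_mem_oneSubXPowSubgroup hv).neg, fun d _ hd ↦ ?_⟩
  have vanish := coeff_unitLogDeriv_eulerDerivation_of_X_pow_dvd huv (Nat.lt_succ_of_le hd)
  rw [unitLogDeriv_mul, map_add] at vanish
  exact eq_neg_of_add_eq_zero_left vanish

end DoldLogDeriv

section Trace

variable {R ι : Type*} [CommRing R] [Fintype ι] [DecidableEq ι]

/-- The generating series `∑ A ^ n X ^ n` of the powers of `A`, as a matrix of power series. -/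
def matrixPowSeries (A : Matrix ι ι R) : Matrix ι ι R⟦X⟧ :=
  Matrix.of fun i j ↦ mk fun n ↦ (A ^ n) i j

theorem matrixPowSeries_mul_one_sub (A : Matrix ι ι R) :
    matrixPowSeries A * (1 - (X : R⟦X⟧) • A.map C) = 1 := by
  have shift (i j : ι) : (matrixPowSeries A * A.map C) i j = mk fun n ↦ (A ^ (n + 1)) i j := by
    ext n
    simp [matrixPowSeries, Matrix.mul_apply, pow_succ, coeff_mul_C]
  ext i j n
  rw [mul_sub, mul_one, Matrix.mul_smul, Matrix.sub_apply, Matrix.smul_apply, shift, smul_eq_mul,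
    Matrix.one_apply]
  cases n with
  | zero => split_ifs <;> simp [matrixPowSeries, *]
  | succ n => split_ifs <;> simp [matrixPowSeries, coeff_succ_X_mul, coeff_one]

/-- `1 - X A` as an invertible matrix of power series. Its determinant is the reversed
characteristic polynomial of `A`. -/
noncomputable def oneSubXSMul (A : Matrix ι ι R) : GL ι R⟦X⟧ where
  val := 1 - (X : R⟦X⟧) • A.map C
  inv := matrixPowSeries A
  val_inv := mul_eq_one_comm.1 (matrixPowSeries_mul_one_sub A)
  inv_val := matrixPowSeries_mul_one_sub A

theorem val_oneSubXSMul (A : Matrix ι ι R) :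
    (oneSubXSMul A : Matrix ι ι R⟦X⟧) = 1 - (X : R⟦X⟧) • A.map C :=
  rfl

theorem val_inv_oneSubXSMul (A : Matrix ι ι R) :
    ((oneSubXSMul A)⁻¹ : GL ι R⟦X⟧) = matrixPowSeries A :=
  rfl

theorem constantCoeff_det_oneSubXSMul (A : Matrix ι ι R) :
    constantCoeff ((oneSubXSMul A).det : R⟦X⟧) = 1 := by
  have constantCoeff_eq_one :
      (constantCoeff (R := R)).mapMatrix (1 - (X : R⟦X⟧) • A.map C) = 1 := by
    ext i j
    rw [RingHom.mapMatrix_apply, Matrix.map_apply, Matrix.sub_apply, Matrix.smul_apply,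
      Matrix.one_apply, Matrix.one_apply]
    split_ifs <;> simp
  rw [Matrix.GeneralLinearGroup.val_det_apply, val_oneSubXSMul, RingHom.map_det,
    constantCoeff_eq_one, Matrix.det_one]

theorem map_eulerDerivation_oneSubXSMul (A : Matrix ι ι R) :
    (oneSubXSMul A : Matrix ι ι R⟦X⟧).map (eulerDerivation R) = oneSubXSMul A - 1 := by
  rw [val_oneSubXSMul, sub_sub_cancel_left]
  ext1 i j
  rw [Matrix.map_apply, Matrix.sub_apply, Matrix.one_apply]
  split_ifs <;> simp [eulerDerivation]

theorem coeff_unitLogDeriv_det_oneSubXSMul (A : Matrix ι ι R) {n : ℕ} (hn : n ≠ 0) :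
    coeff n (unitLogDeriv (eulerDerivation R) (oneSubXSMul A).det) = -(A ^ n).trace := by
  rw [unitLogDeriv_det, map_eulerDerivation_oneSubXSMul, mul_sub, Units.inv_mul, mul_one,
    val_inv_oneSubXSMul, Matrix.trace_sub, Matrix.trace_one, map_sub,
    ← map_natCast (C : R →+* R⟦X⟧), coeff_C, if_neg hn, zero_sub]
  simp [matrixPowSeries, Matrix.trace]

end Trace

theorem trace_pow_int_matrix_dold_general {ι : Type*} [Fintype ι] [DecidableEq ι]
    (B : Matrix ι ι ℤ) : IsDold fun n ↦ (B ^ n).trace := by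
  refine IsDold.of_forall_exists_eq fun n ↦
    ⟨_, (isDold_coeff_unitLogDeriv (constantCoeff_det_oneSubXSMul B)).neg, fun d hd _ ↦ ?_⟩
  rw [Pi.neg_apply, coeff_unitLogDeriv_det_oneSubXSMul B (Nat.one_le_iff_ne_zero.1 hd), neg_neg]

/-- If `B` is a square matrix with integer entries, then `(trace (B ^ n))` is a Dold
sequence: for every `n ≥ 1`, `n` divides `∑_{d ∣ n} μ(n/d)·trace (B ^ d)`. -/
theorem trace_pow_int_matrix_dold (m : ℕ) (B : Matrix (Fin m) (Fin m) ℤ) :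
    ∀ n : ℕ, 1 ≤ n →
      (n : ℤ) ∣ ∑ d ∈ n.divisors, ArithmeticFunction.moebius (n / d) * (B ^ d).trace :=
  trace_pow_int_matrix_dold_general B
end

section
/- Let A be a square matrix with integer entries. Then for every prime p and every integer r ≥ 1, trace(A^{p^r}) ≡ trace(A^{p^{r−1}}) modulo p^r. -/
/-!
The generating series `T_A = ∑ tr (A ^ (n + 1)) X ^ n` is minus the logarithmic derivative of
`χ_A = det (1 - X A)`. Modulo `p` one has `χ_{A ^ p} ≡ φ χ_A`, where `φ` lifts the Frobenius (the
identity for integer coefficients), because `det (1 - X A) ^ p = det (1 - X ^ p A ^ p)` in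
characteristic `p`. So the quotient `h = χ_{A ^ p} / φ χ_A` has the form `1 + p u`, and it remains
to see that the coefficient of `X ^ (p ^ k - 1)` in `h' / h` is divisible by `p ^ (k + 1)`. Up to
multiples of `p ^ (k + 1)`, the series `h' / h` equals `h ^ (p ^ k - 1) h' = p V(u)'` with
`V' = (1 + p X) ^ (p ^ k - 1)`; now the derivative `V(u)'` contributes the factor `p ^ k`.
-/

section Jacobi

theorem derivation_finset_prod {R A M ι : Type*} [CommSemiring R] [CommSemiring A] [Algebra R A]
    [AddCommMonoid M] [Module A M] [Module R M] [DecidableEq ι] (D : Derivation R A M)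
    (s : Finset ι) (f : ι → A) : D (∏ i ∈ s, f i) = ∑ i ∈ s, (∏ j ∈ s.erase i, f j) • D (f i) := by
  induction s using Finset.induction_on with
  | empty => simp
  | insert a s ha ih =>
    have erase_insert : ∀ i ∈ s, ∏ j ∈ (insert a s).erase i, f j = f a * ∏ j ∈ s.erase i, f j := by
      intro i hi
      rw [Finset.erase_insert_of_ne (by rintro rfl; exact ha hi), Finset.prod_insert (by simp [ha])]
    rw [Finset.prod_insert ha, D.leibniz, ih, Finset.sum_insert ha, Finset.erase_insert ha,
      Finset.smul_sum, add_comm]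
    congr 1
    refine Finset.sum_congr rfl fun i hi => ?_
    rw [erase_insert i hi, mul_smul]

variable {R A n : Type*} [CommSemiring R] [CommRing A] [Algebra R A] [Fintype n] [DecidableEq n]

theorem derivation_det_eq_sum_det_updateCol_s13 (D : Derivation R A A) (B : Matrix n n A) :
    D B.det = ∑ i, (B.updateCol i fun k => D (B k i)).det := by
  simp only [Matrix.det_apply, map_sum]
  rw [Finset.sum_comm]
  refine Finset.sum_congr rfl fun σ _ => ?_
  rw [Units.smul_def, map_zsmul, derivation_finset_prod, ← Units.smul_def, Finset.smul_sum]
  refine Finset.sum_congr rfl fun i _ => ?_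
  rw [← Finset.prod_erase_mul _ _ (Finset.mem_univ i), Matrix.updateCol_self, smul_eq_mul]
  congr 2
  refine Finset.prod_congr rfl fun j hj => ?_
  rw [Matrix.updateCol_ne (Finset.ne_of_mem_erase hj)]

theorem derivation_det_s13 (D : Derivation R A A) (B : Matrix n n A) :
    D B.det = (B.adjugate * B.map D).trace := by
  rw [derivation_det_eq_sum_det_updateCol_s13, Matrix.trace]
  refine Finset.sum_congr rfl fun i _ => ?_
  rw [← Matrix.cramer_apply, Matrix.cramer_eq_adjugate_mulVec]
  rfl

end Jacobi

section LogarithmicDerivative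

open PowerSeries

variable {R n : Type*} [CommRing R] [Fintype n] [DecidableEq n]

/-- The resolvent `(1 - X A)⁻¹ = ∑ A ^ k X ^ k` of a square matrix `A`, encoded as a matrix of power
series rather than as a power series with matrix coefficients. -/
noncomputable def resolventSeries (A : Matrix n n R) : Matrix n n R⟦X⟧ :=
  Matrix.of fun i j => PowerSeries.mk fun k => (A ^ k) i j

theorem map_C_mul_resolventSeries_apply (A : Matrix n n R) (i j : n) :
    (A.map C * resolventSeries A) i j = PowerSeries.mk fun k => (A ^ (k + 1)) i j := by
  ext k
  simp [resolventSeries, Matrix.mul_apply, pow_succ']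

theorem one_sub_X_smul_mul_resolventSeries (A : Matrix n n R) :
    (1 - (X : R⟦X⟧) • A.map C) * resolventSeries A = 1 := by
  rw [sub_mul, one_mul, smul_mul_assoc]
  ext i j k
  rw [Matrix.sub_apply, Matrix.smul_apply, map_C_mul_resolventSeries_apply, smul_eq_mul]
  cases k <;> by_cases hij : i = j <;>
    simp [resolventSeries, coeff_succ_X_mul, Matrix.one_apply, coeff_one, hij]

theorem coe_charpolyRev (A : Matrix n n R) :
    (A.charpolyRev : R⟦X⟧) = (1 - (X : R⟦X⟧) • A.map C).det := by
  rw [Matrix.charpolyRev, ← Polynomial.coeToPowerSeries.ringHom_apply, RingHom.map_det]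
  congr 1
  ext1 i j
  simp [Matrix.one_apply, apply_ite, X_mul]

theorem isUnit_coe_charpolyRev (A : Matrix n n R) : IsUnit (A.charpolyRev : R⟦X⟧) := by
  rw [isUnit_iff_constantCoeff, Polynomial.constantCoeff_coe,
    Polynomial.coeff_zero_eq_eval_zero, Matrix.eval_charpolyRev]
  exact isUnit_one

theorem derivative_coe_charpolyRev (A : Matrix n n R) :
    derivative R (A.charpolyRev : R⟦X⟧) =
      A.charpolyRev * -PowerSeries.mk fun k => (A ^ (k + 1)).trace := by
  set B : Matrix n n R⟦X⟧ := 1 - (X : R⟦X⟧) • A.map C with hB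
  have adjugate_eq : B.adjugate = B.det • resolventSeries A := by
    rw [← mul_one B.adjugate, ← one_sub_X_smul_mul_resolventSeries A, ← hB, ← mul_assoc,
      Matrix.adjugate_mul, smul_mul_assoc, one_mul]
  have map_derivative : B.map (derivative R) = -A.map C := by
    ext1 i j
    by_cases hij : i = j <;> simp [hB, hij]
  have trace_eq : (A.map C * resolventSeries A).trace =
      PowerSeries.mk fun k => (A ^ (k + 1)).trace := by
    ext k
    simp [Matrix.trace, map_C_mul_resolventSeries_apply]
  rw [coe_charpolyRev, ← hB, derivation_det_s13, adjugate_eq, map_derivative, mul_neg, smul_mul_assoc,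
    Matrix.trace_neg, Matrix.trace_smul, Matrix.trace_mul_comm, trace_eq, smul_eq_mul, mul_neg]

end LogarithmicDerivative

section Coefficients

variable {R : Type*} [CommRing R] {p : ℕ}

open Polynomial in
variable (R) in
-- Over `ℤ`, one may take `V = ((1 + p X) ^ (p ^ k) - 1) / p ^ (k + 1)`.
theorem exists_derivative_eq_one_add_mul_X_pow (hp : p ≠ 0) (k : ℕ) :
    ∃ V : R[X], derivative V = (1 + (p : R[X]) * X) ^ (p ^ k - 1) := by
  obtain ⟨V, hV⟩ : (p : ℤ[X]) ^ (k + 1) ∣ (1 + (p : ℤ[X]) * X) ^ p ^ k - 1 ^ p ^ k :=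
    dvd_sub_pow_of_dvd_sub (by simp) k
  have derivative_V : derivative V = (1 + (p : ℤ[X]) * X) ^ (p ^ k - 1) := by
    refine mul_left_cancel₀ (pow_ne_zero (k + 1) (Nat.cast_ne_zero.mpr hp)) ?_
    calc (p : ℤ[X]) ^ (k + 1) * derivative V
        = derivative ((p : ℤ[X]) ^ (k + 1) * V) := by rw [← Nat.cast_pow, derivative_natCast_mul]
      _ = (p : ℤ[X]) ^ k * (1 + (p : ℤ[X]) * X) ^ (p ^ k - 1) * (p : ℤ[X]) := by
        rw [← hV]
        simp [derivative_pow]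
      _ = (p : ℤ[X]) ^ (k + 1) * (1 + (p : ℤ[X]) * X) ^ (p ^ k - 1) := by ring
  exact ⟨V.map (Int.castRingHom R), by simp [derivative_map, derivative_V]⟩

open PowerSeries

theorem coeff_natCast_pow_mul (a j : ℕ) (f : R⟦X⟧) (m : ℕ) :
    coeff m ((a : R⟦X⟧) ^ j * f) = (a : R) ^ j * coeff m f := by
  rw [← coeff_C_mul]
  simp

theorem pow_dvd_coeff_of_one_add_mul_eq_derivative (hp : p ≠ 0) (k : ℕ) {c u : R⟦X⟧}
    (h : (1 + p * u) * c = p * derivative R u) : (p : R) ^ (k + 1) ∣ coeff (p ^ k - 1) c := by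
  obtain ⟨V, hV⟩ := exists_derivative_eq_one_add_mul_X_pow R hp k
  obtain ⟨w, hw⟩ : (p : R⟦X⟧) ^ (k + 1) ∣ (1 + p * u) ^ p ^ k - 1 ^ p ^ k :=
    dvd_sub_pow_of_dvd_sub (by simp) k
  have p_pow_pos : 0 < p ^ k := by positivity
  have derivative_aeval : derivative R (Polynomial.aeval u V) =
      (1 + p * u) ^ (p ^ k - 1) * derivative R u := by
    simp [Derivation.map_aeval, hV]
  have c_eq : c = (p : R⟦X⟧) ^ 1 * derivative R (Polynomial.aeval u V) -
      (p : R⟦X⟧) ^ (k + 1) * (w * c) := by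
    have pow_split := pow_sub_one_mul p_pow_pos.ne' (1 + p * u)
    rw [one_pow] at hw
    linear_combination (1 + p * u) ^ (p ^ k - 1) * h - c * pow_split - p * derivative_aeval - c * hw
  have coeff_eq : coeff (p ^ k - 1) (derivative R (Polynomial.aeval u V)) =
      coeff (p ^ k) (Polynomial.aeval u V) * (p : R) ^ k := by
    rw [coeff_derivative, Nat.sub_add_cancel p_pow_pos, ← Nat.cast_add_one,
      Nat.sub_add_cancel p_pow_pos, Nat.cast_pow]
  rw [c_eq, map_sub, coeff_natCast_pow_mul, coeff_natCast_pow_mul, coeff_eq]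
  exact dvd_sub ⟨coeff (p ^ k) (Polynomial.aeval u V), by ring⟩ (dvd_mul_right _ _)

theorem pow_dvd_coeff_sub_of_derivative_eq_mul (hp : p ≠ 0) (k : ℕ) {f g a b : R⟦X⟧}
    (hf : IsUnit f) (ha : derivative R f = f * a) (hb : derivative R g = g * b)
    (h : (p : R⟦X⟧) ∣ g - f) : (p : R) ^ (k + 1) ∣ coeff (p ^ k - 1) (b - a) := by
  obtain ⟨w, hw⟩ := h
  obtain ⟨u, rfl⟩ := hf.dvd (a := w)
  obtain rfl : g = f * (1 + p * u) := by linear_combination hw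
  refine pow_dvd_coeff_of_one_add_mul_eq_derivative hp k (u := u) (hf.mul_left_cancel ?_)
  simp only [Derivation.leibniz, map_add, Derivation.map_one_eq_zero, Derivation.map_natCast,
    smul_eq_mul, ha] at hb
  linear_combination -hb

theorem pow_dvd_trace_pow_sub_trace_pow {m n : Type*} [Fintype m] [DecidableEq m] [Fintype n]
    [DecidableEq n] (hp : p ≠ 0) {A : Matrix m m R} {B : Matrix n n R}
    (h : (p : Polynomial R) ∣ A.charpolyRev - B.charpolyRev) (k : ℕ) :
    (p : R) ^ (k + 1) ∣ (A ^ p ^ k).trace - (B ^ p ^ k).trace := by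
  have dvd_coe : (p : R⟦X⟧) ∣ A.charpolyRev - B.charpolyRev := by
    simpa using map_dvd (Polynomial.coeToPowerSeries.ringHom (R := R)) h
  have dvd_coeff := pow_dvd_coeff_sub_of_derivative_eq_mul hp k (isUnit_coe_charpolyRev B)
    (derivative_coe_charpolyRev B) (derivative_coe_charpolyRev A) dvd_coe
  have p_pow_pos : 0 < p ^ k := by positivity
  rw [neg_sub_neg, map_sub, coeff_mk, coeff_mk, Nat.sub_add_cancel p_pow_pos] at dvd_coeff
  exact dvd_sub_comm.mp dvd_coeff

end Coefficients

section Frobenius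

open Polynomial

variable {R S n : Type*} [CommRing R] [CommRing S] [Fintype n] [DecidableEq n]

theorem charpolyRev_map (f : R →+* S) (A : Matrix n n R) :
    (A.map f).charpolyRev = A.charpolyRev.map f := by
  rw [Matrix.charpolyRev, Matrix.charpolyRev, ← coe_mapRingHom, RingHom.map_det]
  congr 1
  ext1 i j
  simp [Matrix.one_apply, apply_ite]

theorem charpolyRev_pow_char (p : ℕ) [Fact p.Prime] [CharP R p] (A : Matrix n n R) :
    (A ^ p).charpolyRev = A.charpolyRev.map (frobenius R p) := by
  cases isEmpty_or_nonempty n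
  · simp [Matrix.charpolyRev]
  have one_sub_pow : (expand R p).mapMatrix (1 - (X : R[X]) • (A ^ p).map C) =
      (1 - (X : R[X]) • A.map C) ^ p := by
    rw [sub_pow_char_of_commute p (Commute.one_left _), one_pow, _root_.smul_pow,
      ← RingHom.mapMatrix_apply, ← RingHom.mapMatrix_apply, ← map_pow]
    ext1 i j
    simp [Matrix.one_apply, apply_ite]
  apply expand_injective (Fact.out : p.Prime).pos
  calc expand R p (A ^ p).charpolyRev
      = A.charpolyRev ^ p := by
        rw [Matrix.charpolyRev, AlgHom.map_det, one_sub_pow, Matrix.det_pow, Matrix.charpolyRev]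
    _ = expand R p (A.charpolyRev.map (frobenius R p)) := by
        rw [← map_expand, map_frobenius_expand]

theorem dvd_charpolyRev_pow_sub_charpolyRev_map {p : ℕ} (hp : p.Prime) (φ : R →+* R)
    (hφ : ∀ x, (p : R) ∣ φ x - x ^ p) (A : Matrix n n R) :
    (p : R[X]) ∣ (A ^ p).charpolyRev - (A.map φ).charpolyRev := by
  by_cases hunit : IsUnit (p : R)
  · exact (by simpa using hunit.map C : IsUnit (p : R[X])).dvd
  have := Fact.mk hp
  have := CharP.quotient R p hunit
  let π := Ideal.Quotient.mk (Ideal.span {(p : R)})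
  have frobenius_comp : (frobenius _ p).comp π = π.comp φ := by
    ext x
    have hx := (Ideal.Quotient.eq_zero_iff_dvd _ _).mpr (hφ x)
    rw [map_sub, map_pow, sub_eq_zero] at hx
    exact hx.symm
  have map_eq : (A ^ p).charpolyRev.map π = (A.map φ).charpolyRev.map π := by
    rw [← charpolyRev_map, ← RingHom.mapMatrix_apply, map_pow, charpolyRev_pow_char,
      RingHom.mapMatrix_apply, charpolyRev_map, charpolyRev_map, map_map, map_map, frobenius_comp]
  rw [← C_eq_natCast, C_dvd_iff_dvd_coeff]
  intro i
  rw [← Ideal.Quotient.eq_zero_iff_dvd, coeff_sub, map_sub, sub_eq_zero, ← coeff_map, ← coeff_map]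
  exact congrArg (coeff · i) map_eq

end Frobenius

theorem trace_pow_prime_pow_congruence_general {R n : Type*} [CommRing R] [Fintype n]
    [DecidableEq n] {p : ℕ} (hp : p.Prime) (φ : R →+* R) (hφ : ∀ x, (p : R) ∣ φ x - x ^ p)
    (A : Matrix n n R) (k : ℕ) :
    (p : R) ^ (k + 1) ∣ (A ^ p ^ (k + 1)).trace - φ (A ^ p ^ k).trace := by
  have dvd_trace := pow_dvd_trace_pow_sub_trace_pow hp.ne_zero
    (dvd_charpolyRev_pow_sub_charpolyRev_map hp φ hφ A) k
  rwa [← pow_mul, ← pow_succ', ← RingHom.mapMatrix_apply, ← map_pow, RingHom.mapMatrix_apply,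
    ← AddMonoidHom.map_trace] at dvd_trace

/-- Euler–Fermat congruence for integer matrices: for any square integer matrix `A`,
prime `p` and `r ≥ 1`, `trace (A ^ (p ^ r)) ≡ trace (A ^ (p ^ (r − 1)))` modulo `p ^ r`. -/
theorem trace_pow_prime_pow_congruence (m : ℕ) (A : Matrix (Fin m) (Fin m) ℤ)
    (p : ℕ) (hp : p.Prime) (r : ℕ) (hr : 1 ≤ r) :
    ((p : ℤ) ^ r) ∣ (A ^ (p ^ r)).trace - (A ^ (p ^ (r - 1))).trace := by
  obtain ⟨k, rfl⟩ := Nat.exists_eq_add_of_le' hr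
  exact trace_pow_prime_pow_congruence_general hp (RingHom.id ℤ)
    (fun x => (Int.ModEq.pow_prime_eq_self hp x).dvd) A k
end
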